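/- Let (L,d,λ) be the weak Lie 3-algebra associated to an (algebraically modeled) CLWX 2-algebroid as in the context. Then the skew-symmetrization λ̄ of λ is a (semi-strict) Lie 3-algebra structure on (L,d), and its structure maps are given explicitly by: λ̄2 = (1/2)·(λ2 − λ2^{(12)}) (so λ̄2(x,y) = (1/2)(x∘y − y∘x) on E-components, λ̄2(x,f) = (1/2)·S(x,Df) and λ̄2(f,x) = −(1/2)·S(x,Df) for x ∈ E0, f ∈ R); λ̄3 = Ω − (1/12)·Σ_{σ∈S3} sgn(σ)·(λ21∘1λ2)^σ (the correction terms being built from S(e1∘e2, e3)); and λ̄4 = λ21∘1λ3, i.e. λ̄4(e1,e2,e3,e4) = S(Ω(e1,e2,e3), e4) on the relevant components. In particular these maps are skew-symmetric and satisfy the Leibniz 3-algebra equations (L1)–(L4). -/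

import Mathlib

namespace WL3

open Finset

/-! ## Graded multilinear maps -/

/-- Cast along an equality of degrees. -/
def gcast {M : ℤ → Type} {i j : ℤ} (h : i = j) (x : M i) : M j := h ▸ x

/-- A degree-`r`, arity-`m` map between ℤ-graded types, given by its components on
homogeneous tuples: its component at degrees `d` maps `L (d 1) ⊗ ⋯ ⊗ L (d m)` to
`M (r + d 1 + ⋯ + d m)`. -/
abbrev MMap (L M : ℤ → Type) (m : ℕ) (r : ℤ) : Type :=
  ∀ d : Fin m → ℤ, (∀ j, L (d j)) → M (r + ∑ j, d j)

variable {L M N : ℤ → Type}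

/-- Cast an `MMap` along equalities of arities and degrees. -/
def mcast {m m' : ℕ} {r r' : ℤ} (hm : m = m') (hr : r = r') (μ : MMap L M m r) :
    MMap L M m' r' := by subst hm; subst hr; exact μ

/-- Koszul sign of the permutation `σ` acting on a tuple of homogeneous elements of
degrees `d`: `∏_{i<j, σ i > σ j} (-1)^(d i · d j)`. -/
def koszulSign {m : ℕ} (d : Fin m → ℤ) (σ : Equiv.Perm (Fin m)) : ℤ :=
  ∏ p ∈ Finset.univ.filter (fun p : Fin m × Fin m => p.1 < p.2 ∧ σ p.2 < σ p.1),
    (-1 : ℤ) ^ (d p.1 * d p.2).natAbs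

/-- The action `μ ↦ μ^σ`, `μ^σ(x₁,…,x_m) = ε(σ;x)·μ(x_{σ⁻¹1},…,x_{σ⁻¹m})`. -/
def pa [∀ i, AddCommGroup (M i)] {m : ℕ} {r : ℤ} (σ : Equiv.Perm (Fin m)) (μ : MMap L M m r) :
    MMap L M m r := fun d x =>
  koszulSign d σ •
    gcast (by rw [Equiv.sum_comp σ.symm d])
      (μ (fun j => d (σ.symm j)) (fun j => x (σ.symm j)))

/-- Degrees of the outer map in a partial composition. -/
def outDeg (m₁ m₂ n : ℕ) (s : ℤ) (d : Fin (m₁ + n + m₂) → ℤ) : Fin (m₁ + 1 + m₂) → ℤ :=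
  Fin.append
    (Fin.append (fun j : Fin m₁ => d (Fin.castAdd m₂ (Fin.castAdd n j)))
      (fun _ : Fin 1 => s + ∑ j : Fin n, d (Fin.castAdd m₂ (Fin.natAdd m₁ j))))
    (fun j : Fin m₂ => d (Fin.natAdd (m₁ + n) j))

theorem outDeg_left (m₁ m₂ n : ℕ) (s : ℤ) (d : Fin (m₁ + n + m₂) → ℤ) (j : Fin m₁) :
    outDeg m₁ m₂ n s d (Fin.castAdd m₂ (Fin.castAdd 1 j))
      = d (Fin.castAdd m₂ (Fin.castAdd n j)) := by
  simp [outDeg, Fin.append_left]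

theorem outDeg_mid (m₁ m₂ n : ℕ) (s : ℤ) (d : Fin (m₁ + n + m₂) → ℤ) (j : Fin 1) :
    outDeg m₁ m₂ n s d (Fin.castAdd m₂ (Fin.natAdd m₁ j))
      = s + ∑ j : Fin n, d (Fin.castAdd m₂ (Fin.natAdd m₁ j)) := by
  simp [outDeg, Fin.append_left, Fin.append_right]

theorem outDeg_right (m₁ m₂ n : ℕ) (s : ℤ) (d : Fin (m₁ + n + m₂) → ℤ) (j : Fin m₂) :
    outDeg m₁ m₂ n s d (Fin.natAdd (m₁ + 1) j) = d (Fin.natAdd (m₁ + n) j) := by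
  simp [outDeg, Fin.append_right]

theorem outDeg_sum (m₁ m₂ n : ℕ) (r s : ℤ) (d : Fin (m₁ + n + m₂) → ℤ) :
    r + ∑ j, outDeg m₁ m₂ n s d j = (r + s) + ∑ j, d j := by
  simp [outDeg, Fin.sum_univ_add, Fin.append_left, Fin.append_right]
  ring

/-- Partial (operadic) composition `μ ∘_{m₁+1} ν` of `μ` (of arity `m₁ + 1 + m₂`) with `ν`
inserted in the slot `m₁ + 1`, with the Koszul sign `(-1)^(|ν|·(d 1 + ⋯ + d m₁))`. -/
def pcomp [∀ i, AddCommGroup (L i)] [∀ i, AddCommGroup (M i)] (m₁ m₂ : ℕ) {n : ℕ} {r s : ℤ}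
    (μ : MMap L M (m₁ + 1 + m₂) r) (ν : MMap L L n s) : MMap L M (m₁ + n + m₂) (r + s) :=
  fun d x =>
    ((-1 : ℤ) ^ (s * ∑ j : Fin m₁, d (Fin.castAdd m₂ (Fin.castAdd n j))).natAbs) •
    gcast (outDeg_sum m₁ m₂ n r s d)
      (μ (outDeg m₁ m₂ n s d)
        (fun j => Fin.addCases (motive := fun t => L (outDeg m₁ m₂ n s d t))
          (fun j' => Fin.addCases (motive := fun t => L (outDeg m₁ m₂ n s d (Fin.castAdd m₂ t)))
            (fun j1 => gcast (outDeg_left m₁ m₂ n s d j1).symm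
              (x (Fin.castAdd m₂ (Fin.castAdd n j1))))
            (fun j0 => gcast (outDeg_mid m₁ m₂ n s d j0).symm
              (ν (fun j2 => d (Fin.castAdd m₂ (Fin.natAdd m₁ j2)))
                 (fun j2 => x (Fin.castAdd m₂ (Fin.natAdd m₁ j2)))))
            j')
          (fun j3 => gcast (outDeg_right m₁ m₂ n s d j3).symm (x (Fin.natAdd (m₁ + n) j3)))
          j))

/-- Composition `μ ∘ g` of an arity-1 map with an arity-`a` map. -/
def comp₁ {a : ℕ} {r s : ℤ} (μ : MMap M N 1 r) (g : MMap L M a s) : MMap L N a (r + s) :=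
  fun d x =>
    gcast (by rw [Fin.sum_univ_one]; ring)
      (μ (fun _ : Fin 1 => s + ∑ j, d j) (fun _ => g d x))

theorem sum2 (a b : ℕ) (r s₁ s₂ : ℤ) (d : Fin (a + b) → ℤ) :
    r + ∑ t : Fin 2, ![s₁ + ∑ j : Fin a, d (Fin.castAdd b j),
                       s₂ + ∑ j : Fin b, d (Fin.natAdd a j)] t
      = (r + (s₁ + s₂)) + ∑ j, d j := by
  simp [Fin.sum_univ_two, Fin.sum_univ_add]
  ring

/-- Full composition `μ ∘ (g₁, g₂)` with Koszul signs. -/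
def comp₂ [∀ i, AddCommGroup (N i)] {a b : ℕ} {r s₁ s₂ : ℤ}
    (μ : MMap M N 2 r) (g₁ : MMap L M a s₁) (g₂ : MMap L M b s₂) :
    MMap L N (a + b) (r + (s₁ + s₂)) :=
  fun d x =>
    ((-1 : ℤ) ^ (s₂ * ∑ j : Fin a, d (Fin.castAdd b j)).natAbs) •
    gcast (sum2 a b r s₁ s₂ d)
      (μ ![s₁ + ∑ j : Fin a, d (Fin.castAdd b j), s₂ + ∑ j : Fin b, d (Fin.natAdd a j)]
        (Fin.cons (gcast (by simp) (g₁ (fun j => d (Fin.castAdd b j)) (fun j => x (Fin.castAdd b j))))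
          (fun _ : Fin 1 => gcast (by simp) (g₂ (fun j => d (Fin.natAdd a j)) (fun j => x (Fin.natAdd a j))))))

theorem sum3 (a b c : ℕ) (r s₁ s₂ s₃ : ℤ) (d : Fin (a + b + c) → ℤ) :
    r + ∑ t : Fin 3, ![s₁ + ∑ j : Fin a, d (Fin.castAdd c (Fin.castAdd b j)),
                       s₂ + ∑ j : Fin b, d (Fin.castAdd c (Fin.natAdd a j)),
                       s₃ + ∑ j : Fin c, d (Fin.natAdd (a + b) j)] t
      = (r + (s₁ + s₂ + s₃)) + ∑ j, d j := by
  simp [Fin.sum_univ_three, Fin.sum_univ_add]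
  ring

/-- Full composition `μ ∘ (g₁, g₂, g₃)` with Koszul signs. -/
def comp₃ [∀ i, AddCommGroup (N i)] {a b c : ℕ} {r s₁ s₂ s₃ : ℤ}
    (μ : MMap M N 3 r) (g₁ : MMap L M a s₁) (g₂ : MMap L M b s₂) (g₃ : MMap L M c s₃) :
    MMap L N (a + b + c) (r + (s₁ + s₂ + s₃)) :=
  fun d x =>
    ((-1 : ℤ) ^ (s₂ * (∑ j : Fin a, d (Fin.castAdd c (Fin.castAdd b j)))
        + s₃ * ((∑ j : Fin a, d (Fin.castAdd c (Fin.castAdd b j)))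
          + ∑ j : Fin b, d (Fin.castAdd c (Fin.natAdd a j)))).natAbs) •
    gcast (sum3 a b c r s₁ s₂ s₃ d)
      (μ ![s₁ + ∑ j : Fin a, d (Fin.castAdd c (Fin.castAdd b j)),
           s₂ + ∑ j : Fin b, d (Fin.castAdd c (Fin.natAdd a j)),
           s₃ + ∑ j : Fin c, d (Fin.natAdd (a + b) j)]
        (Fin.cons (gcast (by simp)
            (g₁ (fun j => d (Fin.castAdd c (Fin.castAdd b j)))
                (fun j => x (Fin.castAdd c (Fin.castAdd b j)))))
          (Fin.cons (gcast (by simp)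
              (g₂ (fun j => d (Fin.castAdd c (Fin.natAdd a j)))
                  (fun j => x (Fin.castAdd c (Fin.natAdd a j)))))
            (fun _ : Fin 1 => gcast (by simp)
              (g₃ (fun j => d (Fin.natAdd (a + b) j))
                  (fun j => x (Fin.natAdd (a + b) j)))))))

theorem sum4 (a b c e : ℕ) (r s₁ s₂ s₃ s₄ : ℤ) (d : Fin (a + b + c + e) → ℤ) :
    r + ∑ t : Fin 4, ![s₁ + ∑ j : Fin a, d (Fin.castAdd e (Fin.castAdd c (Fin.castAdd b j))),
                       s₂ + ∑ j : Fin b, d (Fin.castAdd e (Fin.castAdd c (Fin.natAdd a j))),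
                       s₃ + ∑ j : Fin c, d (Fin.castAdd e (Fin.natAdd (a + b) j)),
                       s₄ + ∑ j : Fin e, d (Fin.natAdd (a + b + c) j)] t
      = (r + (s₁ + s₂ + s₃ + s₄)) + ∑ j, d j := by
  simp [Fin.sum_univ_four, Fin.sum_univ_add]
  ring

/-- Full composition `μ ∘ (g₁, g₂, g₃, g₄)` with Koszul signs. -/
def comp₄ [∀ i, AddCommGroup (N i)] {a b c e : ℕ} {r s₁ s₂ s₃ s₄ : ℤ}
    (μ : MMap M N 4 r) (g₁ : MMap L M a s₁) (g₂ : MMap L M b s₂) (g₃ : MMap L M c s₃)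
    (g₄ : MMap L M e s₄) :
    MMap L N (a + b + c + e) (r + (s₁ + s₂ + s₃ + s₄)) :=
  fun d x =>
    ((-1 : ℤ) ^ (s₂ * (∑ j : Fin a, d (Fin.castAdd e (Fin.castAdd c (Fin.castAdd b j))))
        + s₃ * ((∑ j : Fin a, d (Fin.castAdd e (Fin.castAdd c (Fin.castAdd b j))))
          + ∑ j : Fin b, d (Fin.castAdd e (Fin.castAdd c (Fin.natAdd a j))))
        + s₄ * ((∑ j : Fin a, d (Fin.castAdd e (Fin.castAdd c (Fin.castAdd b j))))
          + (∑ j : Fin b, d (Fin.castAdd e (Fin.castAdd c (Fin.natAdd a j))))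
          + ∑ j : Fin c, d (Fin.castAdd e (Fin.natAdd (a + b) j)))).natAbs) •
    gcast (sum4 a b c e r s₁ s₂ s₃ s₄ d)
      (μ ![s₁ + ∑ j : Fin a, d (Fin.castAdd e (Fin.castAdd c (Fin.castAdd b j))),
           s₂ + ∑ j : Fin b, d (Fin.castAdd e (Fin.castAdd c (Fin.natAdd a j))),
           s₃ + ∑ j : Fin c, d (Fin.castAdd e (Fin.natAdd (a + b) j)),
           s₄ + ∑ j : Fin e, d (Fin.natAdd (a + b + c) j)]
        (Fin.cons (gcast (by simp)
            (g₁ (fun j => d (Fin.castAdd e (Fin.castAdd c (Fin.castAdd b j))))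
                (fun j => x (Fin.castAdd e (Fin.castAdd c (Fin.castAdd b j))))))
          (Fin.cons (gcast (by simp)
              (g₂ (fun j => d (Fin.castAdd e (Fin.castAdd c (Fin.natAdd a j))))
                  (fun j => x (Fin.castAdd e (Fin.castAdd c (Fin.natAdd a j))))))
            (Fin.cons (gcast (by simp)
                (g₃ (fun j => d (Fin.castAdd e (Fin.natAdd (a + b) j)))
                    (fun j => x (Fin.castAdd e (Fin.natAdd (a + b) j)))))
              (fun _ : Fin 1 => gcast (by simp)
                (g₄ (fun j => d (Fin.natAdd (a + b + c) j))
                    (fun j => x (Fin.natAdd (a + b + c) j))))))))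

/-- The differential `∂(μ) = D' ∘ μ - (-1)^{|μ|} ∑ᵢ μ ∘ᵢ D`. -/
def bdry [∀ i, AddCommGroup (L i)] [∀ i, AddCommGroup (M i)] {m : ℕ} {r : ℤ}
    (D' : MMap M M 1 (-1)) (D : MMap L L 1 (-1)) (μ : MMap L M m r) : MMap L M m (-1 + r) :=
  comp₁ D' μ - ((-1 : ℤ) ^ r.natAbs) •
    ∑ p : Fin m, mcast (by have := p.isLt; omega) (by ring)
      (pcomp p.val (m - 1 - p.val) (mcast (by have := p.isLt; omega) rfl μ) D)

/-- The identity, as an `MMap`. -/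
def idm : MMap L L 1 0 := fun d x => gcast (by rw [Fin.sum_univ_one, zero_add]) (x 0)

/-- `μ ∘_{m₁+1} ν`, recast to a specified target degree `R`. -/
def pc [∀ i, AddCommGroup (L i)] [∀ i, AddCommGroup (M i)] (R : ℤ) (m₁ m₂ : ℕ) {n : ℕ}
    {r s : ℤ} (μ : MMap L M (m₁ + 1 + m₂) r) (ν : MMap L L n s)
    (h : r + s = R := by norm_num) : MMap L M (m₁ + n + m₂) R :=
  mcast rfl h (pcomp m₁ m₂ μ ν)

/-- `μ ∘ g`, recast to a specified target degree `R`. -/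
def fc1 (R : ℤ) {a : ℕ} {r s : ℤ} (μ : MMap M N 1 r) (g : MMap L M a s)
    (h : r + s = R := by norm_num) : MMap L N a R :=
  mcast rfl h (comp₁ μ g)

/-- `μ ∘ (g₁, g₂)`, recast to a specified target degree `R`. -/
def fc2 [∀ i, AddCommGroup (N i)] (R : ℤ) {a b : ℕ} {r s₁ s₂ : ℤ}
    (μ : MMap M N 2 r) (g₁ : MMap L M a s₁) (g₂ : MMap L M b s₂)
    (h : r + (s₁ + s₂) = R := by norm_num) : MMap L N (a + b) R :=
  mcast rfl h (comp₂ μ g₁ g₂)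

/-- `μ ∘ (g₁, g₂, g₃)`, recast to a specified target degree `R`. -/
def fc3 [∀ i, AddCommGroup (N i)] (R : ℤ) {a b c : ℕ} {r s₁ s₂ s₃ : ℤ}
    (μ : MMap M N 3 r) (g₁ : MMap L M a s₁) (g₂ : MMap L M b s₂) (g₃ : MMap L M c s₃)
    (h : r + (s₁ + s₂ + s₃) = R := by norm_num) : MMap L N (a + b + c) R :=
  mcast rfl h (comp₃ μ g₁ g₂ g₃)

/-- `μ ∘ (g₁, g₂, g₃, g₄)`, recast to a specified target degree `R`. -/
def fc4 [∀ i, AddCommGroup (N i)] (R : ℤ) {a b c e : ℕ} {r s₁ s₂ s₃ s₄ : ℤ}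
    (μ : MMap M N 4 r) (g₁ : MMap L M a s₁) (g₂ : MMap L M b s₂) (g₃ : MMap L M c s₃)
    (g₄ : MMap L M e s₄) (h : r + (s₁ + s₂ + s₃ + s₄) = R := by norm_num) :
    MMap L N (a + b + c + e) R :=
  mcast rfl h (comp₄ μ g₁ g₂ g₃ g₄)

/-- `∂(μ)`, recast to a specified target degree `R`. -/
def bd [∀ i, AddCommGroup (L i)] [∀ i, AddCommGroup (M i)] (R : ℤ) {m : ℕ} {r : ℤ}
    (D' : MMap M M 1 (-1)) (D : MMap L L 1 (-1)) (μ : MMap L M m r)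
    (h : -1 + r = R := by norm_num) : MMap L M m R :=
  mcast rfl h (bdry D' D μ)

/-- Multilinearity over `k` of the components of an `MMap`. -/
def IsMultilinear (k : Type) [CommRing k] {L M : ℤ → Type} [∀ i, AddCommGroup (L i)]
    [∀ i, AddCommGroup (M i)] [∀ i, Module k (L i)] [∀ i, Module k (M i)] {m : ℕ} {r : ℤ}
    (μ : MMap L M m r) : Prop :=
  ∀ (d : Fin m → ℤ) (x : ∀ j, L (d j)) (j : Fin m),
    (∀ a b : L (d j), μ d (Function.update x j (a + b))
        = μ d (Function.update x j a) + μ d (Function.update x j b)) ∧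
    (∀ (c : k) (a : L (d j)), μ d (Function.update x j (c • a)) = c • μ d (Function.update x j a))

/-! ## Permutations (0-indexed; a cycle `(a b c)` is `swap a b * swap b c`) -/

def P12 (m : ℕ) [NeZero m] : Equiv.Perm (Fin m) := Equiv.swap 0 1
def P13 (m : ℕ) [NeZero m] : Equiv.Perm (Fin m) := Equiv.swap 0 2
def P23 (m : ℕ) [NeZero m] : Equiv.Perm (Fin m) := Equiv.swap 1 2
def P34 (m : ℕ) [NeZero m] : Equiv.Perm (Fin m) := Equiv.swap 2 3
def P123 (m : ℕ) [NeZero m] : Equiv.Perm (Fin m) := Equiv.swap 0 1 * Equiv.swap 1 2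
def P132 (m : ℕ) [NeZero m] : Equiv.Perm (Fin m) := Equiv.swap 0 2 * Equiv.swap 2 1
def P234 (m : ℕ) [NeZero m] : Equiv.Perm (Fin m) := Equiv.swap 1 2 * Equiv.swap 2 3
def P243 (m : ℕ) [NeZero m] : Equiv.Perm (Fin m) := Equiv.swap 1 3 * Equiv.swap 3 2
def P1234 (m : ℕ) [NeZero m] : Equiv.Perm (Fin m) :=
  Equiv.swap 0 1 * Equiv.swap 1 2 * Equiv.swap 2 3
def P1432 (m : ℕ) [NeZero m] : Equiv.Perm (Fin m) :=
  Equiv.swap 0 3 * Equiv.swap 3 2 * Equiv.swap 2 1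
def P1342 (m : ℕ) [NeZero m] : Equiv.Perm (Fin m) :=
  Equiv.swap 0 2 * Equiv.swap 2 3 * Equiv.swap 3 1
def P13P24 (m : ℕ) [NeZero m] : Equiv.Perm (Fin m) := Equiv.swap 0 2 * Equiv.swap 1 3

end WL3
namespace WL3

open Finset

variable (k : Type) [CommRing k]

/-- A Leibniz 3-algebra structure: maps `l2, l3, l4` on a complex with differential `D`
satisfying the generalized Jacobi identities (L1)–(L4). -/
structure IsLeibniz3 {L : ℤ → Type} [∀ i, AddCommGroup (L i)] [∀ i, Module k (L i)]
    (D : MMap L L 1 (-1)) (l2 : MMap L L 2 0) (l3 : MMap L L 3 1) (l4 : MMap L L 4 2) :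
    Prop where
  lin2 : IsMultilinear k l2
  lin3 : IsMultilinear k l3
  lin4 : IsMultilinear k l4
  eqL1 : bd (-1) D D l2 = 0
  eqL2 : bd 0 D D l3 =
    pc 0 1 0 l2 l2 - pc 0 0 1 l2 l2 - pa (P12 3) (pc 0 1 0 l2 l2)
  eqL3 : bd 1 D D l4 =
    pc 1 0 1 l2 l3 + pc 1 1 0 l2 l3 - pa (P12 4) (pc 1 1 0 l2 l3)
      + pa (P123 4) (pc 1 1 0 l2 l3) - pc 1 0 2 l3 l2
      + pc 1 1 1 l3 l2 - pa (P12 4) (pc 1 1 1 l3 l2)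
      - pc 1 2 0 l3 l2 + pa (P23 4) (pc 1 2 0 l3 l2) - pa (P132 4) (pc 1 2 0 l3 l2)
  eqL4 : (0 : MMap L L 5 2) =
    pc 2 0 1 l2 l4 - pc 2 1 0 l2 l4 + pa (P12 5) (pc 2 1 0 l2 l4)
      - pa (P123 5) (pc 2 1 0 l2 l4) + pa (P1234 5) (pc 2 1 0 l2 l4)
      + pc 2 0 2 l3 l3 + pc 2 1 1 l3 l3 - pa (P12 5) (pc 2 1 1 l3 l3)
      + pa (P123 5) (pc 2 1 1 l3 l3) + pc 2 2 0 l3 l3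
      - pa (P23 5) (pc 2 2 0 l3 l3) + pa (P132 5) (pc 2 2 0 l3 l3)
      + pa (P234 5) (pc 2 2 0 l3 l3) - pa (P1342 5) (pc 2 2 0 l3 l3)
      + pa (P13P24 5) (pc 2 2 0 l3 l3)
      + pc 2 0 3 l4 l2 - pc 2 1 2 l4 l2 + pa (P12 5) (pc 2 1 2 l4 l2)
      + pc 2 2 1 l4 l2 - pa (P23 5) (pc 2 2 1 l4 l2) + pa (P132 5) (pc 2 2 1 l4 l2)
      - pc 2 3 0 l4 l2 + pa (P34 5) (pc 2 3 0 l4 l2) - pa (P243 5) (pc 2 3 0 l4 l2)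
      + pa (P1432 5) (pc 2 3 0 l4 l2)

/-- A weak Lie 3-algebra: a 3-term chain complex equipped with structure maps
`l2, l3, l4, l21, l211, l31, l32` satisfying (L1)–(L4) and (W1)–(W11). -/
structure WeakLie3 (L : ℤ → Type) [∀ i, AddCommGroup (L i)] [∀ i, Module k (L i)] where
  D : MMap L L 1 (-1)
  linD : IsMultilinear k D
  dd : fc1 (-2) D D = 0
  bound : ∀ i : ℤ, (i < 0 ∨ 2 < i) → ∀ x : L i, x = 0
  l2 : MMap L L 2 0
  l3 : MMap L L 3 1
  l4 : MMap L L 4 2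
  l21 : MMap L L 2 1
  l211 : MMap L L 2 2
  l31 : MMap L L 3 2
  l32 : MMap L L 3 2
  leib : IsLeibniz3 k D l2 l3 l4
  lin21 : IsMultilinear k l21
  lin211 : IsMultilinear k l211
  lin31 : IsMultilinear k l31
  lin32 : IsMultilinear k l32
  w1 : bd 0 D D l21 = l2 + pa (P12 2) l2
  w2 : bd 1 D D l211 = l21 - pa (P12 2) l21
  w3 : bd 1 D D l31 = l3 + pa (P12 3) l3 + pc 1 0 1 l2 l21
  w4 : bd 1 D D l32 = l3 + pa (P23 3) l3 - pc 1 1 0 l2 l21 + pc 1 0 1 l21 l2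
        + pa (P12 3) (pc 1 1 0 l21 l2)
  w5 : l211 + pa (P12 2) l211 = 0
  w6 : l31 - pa (P12 3) l31 = pc 2 0 1 l2 l211
  w7 : l31 - pa (P12 3) l32 + pa (P132 3) l31 - l32 + pa (P23 3) l31 - pa (P123 3) l32
        = pc 2 1 0 l21 l21 + pc 2 0 1 l21 l21 + pa (P12 3) (pc 2 1 0 l21 l21)
          + pa (P132 3) (pc 2 1 0 l211 l2)
  w8 : l32 - pa (P23 3) l32 = - pc 2 1 0 l2 l211 + pc 2 0 1 l211 l2
        + pa (P12 3) (pc 2 1 0 l211 l2)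
  w9 : l4 + pa (P12 4) l4 = pc 2 0 1 l2 l31 - pc 2 2 0 l31 l2
        + pa (P123 4) (pc 2 1 0 l2 l31) + pc 2 0 2 l3 l21
  w10 : l4 + pa (P23 4) l4 = pc 2 0 1 l2 l32 - pc 2 1 1 l3 l21 + pc 2 1 0 l2 l31
        - pc 2 0 2 l31 l2 - pa (P12 4) (pc 2 1 1 l31 l2) - pa (P132 4) (pc 2 2 0 l31 l2)
  w11 : l4 + pa (P34 4) l4 = pc 2 0 1 l21 l3 - pc 2 0 2 l32 l2 + pc 2 1 1 l32 l2
        - pa (P12 4) (pc 2 1 1 l32 l2) + pc 2 2 0 l3 l21 + pa (P23 4) (pc 2 2 0 l32 l2)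
        - pa (P132 4) (pc 2 2 0 l32 l2) + pc 2 1 0 l2 l32 - pa (P12 4) (pc 2 1 0 l2 l32)
        + pa (P123 4) (pc 2 1 0 l21 l3)

end WL3
namespace WL3

open Finset

variable (k : Type) [CommRing k]

/-- A weak morphism of weak Lie 3-algebras `(f1,f2,f21,f3) : A → B`, i.e. a solution of
equations (M1)–(M8). -/
structure IsWeakMorphism {L M : ℤ → Type} [∀ i, AddCommGroup (L i)] [∀ i, Module k (L i)]
    [∀ i, AddCommGroup (M i)] [∀ i, Module k (M i)]
    (A : WeakLie3 k L) (B : WeakLie3 k M)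
    (f1 : MMap L M 1 0) (f2 : MMap L M 2 1) (f21 : MMap L M 2 2) (f3 : MMap L M 3 2) :
    Prop where
  lin1 : IsMultilinear k f1
  lin2 : IsMultilinear k f2
  lin21 : IsMultilinear k f21
  lin3 : IsMultilinear k f3
  m1 : bd (-1) B.D A.D f1 = 0
  m2 : bd 0 B.D A.D f2 = fc1 0 f1 A.l2 - fc2 0 B.l2 f1 f1
  m3 : bd 1 B.D A.D f3 = fc1 1 f1 A.l3 - pc 1 1 0 f2 A.l2 + pc 1 0 1 f2 A.l2
        + pa (P12 3) (pc 1 1 0 f2 A.l2) - fc3 1 B.l3 f1 f1 f1 - fc2 1 B.l2 f1 f2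
        + fc2 1 B.l2 f2 f1 + pa (P12 3) (fc2 1 B.l2 f1 f2)
  m4 : fc1 2 f1 A.l4 - fc4 2 B.l4 f1 f1 f1 f1 =
        pc 2 0 1 f2 A.l3 + pc 2 1 0 f2 A.l3 - pa (P12 4) (pc 2 1 0 f2 A.l3)
        + pa (P123 4) (pc 2 1 0 f2 A.l3) - pc 2 0 2 f3 A.l2 + pc 2 1 1 f3 A.l2
        - pa (P12 4) (pc 2 1 1 f3 A.l2) - pc 2 2 0 f3 A.l2 + pa (P23 4) (pc 2 2 0 f3 A.l2)
        - pa (P132 4) (pc 2 2 0 f3 A.l2) + fc2 2 B.l2 f3 f1 + fc2 2 B.l2 f1 f3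
        - pa (P12 4) (fc2 2 B.l2 f1 f3) + pa (P123 4) (fc2 2 B.l2 f1 f3)
        - fc2 2 B.l2 f2 f2 + pa (P23 4) (fc2 2 B.l2 f2 f2) - pa (P132 4) (fc2 2 B.l2 f2 f2)
        + fc3 2 B.l3 f2 f1 f1 - fc3 2 B.l3 f1 f2 f1 + pa (P12 4) (fc3 2 B.l3 f1 f2 f1)
        + fc3 2 B.l3 f1 f1 f2 - pa (P23 4) (fc3 2 B.l3 f1 f1 f2)
        + pa (P132 4) (fc3 2 B.l3 f1 f1 f2)
  m5 : bd 1 B.D A.D f21 = - f2 - pa (P12 2) f2 + fc1 1 f1 A.l21 - fc2 1 B.l21 f1 f1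
  m6 : fc1 2 f1 A.l211 - fc2 2 B.l211 f1 f1 = f21 - pa (P12 2) f21
  m7 : fc1 2 f1 A.l31 - fc3 2 B.l31 f1 f1 f1 =
        f3 + pa (P12 3) f3 + pc 2 0 1 f2 A.l21 + fc2 2 B.l2 f21 f1
  m8 : fc1 2 f1 A.l32 - fc3 2 B.l32 f1 f1 f1 =
        f3 + pa (P23 3) f3 - pc 2 1 0 f2 A.l21 + pc 2 0 1 f21 A.l2
        + pa (P12 3) (pc 2 1 0 f21 A.l2) - fc2 2 B.l2 f1 f21 - fc2 2 B.l21 f2 f1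
        - pa (P12 3) (fc2 2 B.l21 f1 f2)

/-- A morphism of (semi-strict) Lie 3-algebras / Leibniz 3-algebras: equations (M1)–(M4)
for structure maps `(a2,a3,a4)` on the source and `(b2,b3,b4)` on the target. -/
structure IsLeibMorphism {L M : ℤ → Type} [∀ i, AddCommGroup (L i)] [∀ i, Module k (L i)]
    [∀ i, AddCommGroup (M i)] [∀ i, Module k (M i)]
    (DL : MMap L L 1 (-1)) (DM : MMap M M 1 (-1))
    (a2 : MMap L L 2 0) (a3 : MMap L L 3 1) (a4 : MMap L L 4 2)
    (b2 : MMap M M 2 0) (b3 : MMap M M 3 1) (b4 : MMap M M 4 2)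
    (f1 : MMap L M 1 0) (f2 : MMap L M 2 1) (f3 : MMap L M 3 2) : Prop where
  lin1 : IsMultilinear k f1
  lin2 : IsMultilinear k f2
  lin3 : IsMultilinear k f3
  m1 : bd (-1) DM DL f1 = 0
  m2 : bd 0 DM DL f2 = fc1 0 f1 a2 - fc2 0 b2 f1 f1
  m3 : bd 1 DM DL f3 = fc1 1 f1 a3 - pc 1 1 0 f2 a2 + pc 1 0 1 f2 a2
        + pa (P12 3) (pc 1 1 0 f2 a2) - fc3 1 b3 f1 f1 f1 - fc2 1 b2 f1 f2
        + fc2 1 b2 f2 f1 + pa (P12 3) (fc2 1 b2 f1 f2)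
  m4 : fc1 2 f1 a4 - fc4 2 b4 f1 f1 f1 f1 =
        pc 2 0 1 f2 a3 + pc 2 1 0 f2 a3 - pa (P12 4) (pc 2 1 0 f2 a3)
        + pa (P123 4) (pc 2 1 0 f2 a3) - pc 2 0 2 f3 a2 + pc 2 1 1 f3 a2
        - pa (P12 4) (pc 2 1 1 f3 a2) - pc 2 2 0 f3 a2 + pa (P23 4) (pc 2 2 0 f3 a2)
        - pa (P132 4) (pc 2 2 0 f3 a2) + fc2 2 b2 f3 f1 + fc2 2 b2 f1 f3
        - pa (P12 4) (fc2 2 b2 f1 f3) + pa (P123 4) (fc2 2 b2 f1 f3)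
        - fc2 2 b2 f2 f2 + pa (P23 4) (fc2 2 b2 f2 f2) - pa (P132 4) (fc2 2 b2 f2 f2)
        + fc3 2 b3 f2 f1 f1 - fc3 2 b3 f1 f2 f1 + pa (P12 4) (fc3 2 b3 f1 f2 f1)
        + fc3 2 b3 f1 f1 f2 - pa (P23 4) (fc3 2 b3 f1 f1 f2)
        + pa (P132 4) (fc3 2 b3 f1 f1 f2)

/-- A deformation retract `(p, i, h)` of `(L, D)` onto `(L', D')`:
`p`, `i` are chain maps, `id - i∘p = D∘h + h∘D` and `p∘i = id`. -/
structure IsDefRetract {L L' : ℤ → Type} [∀ i, AddCommGroup (L i)] [∀ i, Module k (L i)]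
    [∀ i, AddCommGroup (L' i)] [∀ i, Module k (L' i)]
    (D : MMap L L 1 (-1)) (D' : MMap L' L' 1 (-1))
    (p : MMap L L' 1 0) (i : MMap L' L 1 0) (h : MMap L L 1 1) : Prop where
  linp : IsMultilinear k p
  lini : IsMultilinear k i
  linh : IsMultilinear k h
  chainp : bd (-1) D' D p = 0
  chaini : bd (-1) D D' i = 0
  homotopy : idm - fc1 0 i p = fc1 0 D h + fc1 0 h D
  retract : fc1 0 p i = idm

/-- A weak Lie 2-algebra in the sense of Roytenberg (a 2-term truncation of a weak
Lie 3-algebra). -/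
structure WeakLie2 (L : ℤ → Type) [∀ i, AddCommGroup (L i)] [∀ i, Module k (L i)] where
  D : MMap L L 1 (-1)
  linD : IsMultilinear k D
  dd : fc1 (-2) D D = 0
  bound : ∀ i : ℤ, (i < 0 ∨ 1 < i) → ∀ x : L i, x = 0
  l2 : MMap L L 2 0
  l3 : MMap L L 3 1
  l21 : MMap L L 2 1
  lin2 : IsMultilinear k l2
  lin3 : IsMultilinear k l3
  lin21 : IsMultilinear k l21
  e1 : bd (-1) D D l2 = 0
  e2 : bd 0 D D l3 = pc 0 1 0 l2 l2 - pc 0 0 1 l2 l2 - pa (P12 3) (pc 0 1 0 l2 l2)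
  e3 : (0 : MMap L L 4 1) =
    pc 1 0 1 l2 l3 + pc 1 1 0 l2 l3 - pa (P12 4) (pc 1 1 0 l2 l3)
      + pa (P123 4) (pc 1 1 0 l2 l3) - pc 1 0 2 l3 l2
      + pc 1 1 1 l3 l2 - pa (P12 4) (pc 1 1 1 l3 l2)
      - pc 1 2 0 l3 l2 + pa (P23 4) (pc 1 2 0 l3 l2) - pa (P132 4) (pc 1 2 0 l3 l2)
  e4 : bd 0 D D l21 = l2 + pa (P12 2) l2
  e5 : (0 : MMap L L 2 1) = l21 - pa (P12 2) l21
  e6 : (0 : MMap L L 3 1) = l3 + pa (P12 3) l3 + pc 1 0 1 l2 l21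
  e7 : (0 : MMap L L 3 1) = l3 + pa (P23 3) l3 - pc 1 1 0 l2 l21 + pc 1 0 1 l21 l2
        + pa (P12 3) (pc 1 1 0 l21 l2)

end WL3
namespace WL3

open Finset

section Transfer

variable {k : Type} [CommRing k] {L L' : ℤ → Type}
  [∀ i, AddCommGroup (L i)] [∀ i, Module k (L i)]
  [∀ i, AddCommGroup (L' i)] [∀ i, Module k (L' i)]
variable (A : WeakLie3 k L) (p : MMap L L' 1 0) (i : MMap L' L 1 0) (h : MMap L L 1 1)

/-- `h ∘ λ2` -/
def hl2 : MMap L L 2 1 := fc1 1 h A.l2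
/-- `h ∘ λ3` -/
def hl3 : MMap L L 3 2 := fc1 2 h A.l3
/-- `h ∘ λ21` -/
def hl21 : MMap L L 2 2 := fc1 2 h A.l21

/-- Transferred `λ2' = p ∘ λ2 ∘ (i,i)`. -/
def tl2 : MMap L' L' 2 0 := fc1 0 p (fc2 0 A.l2 i i)

/-- Transferred `λ3'`. -/
def tl3 : MMap L' L' 3 1 :=
  fc1 1 p (fc3 1 A.l3 i i i)
  + fc1 1 p (fc3 1 (pc 1 0 1 A.l2 (hl2 A h)
      - (pc 1 1 0 A.l2 (hl2 A h) - pa (P12 3) (pc 1 1 0 A.l2 (hl2 A h)))) i i i)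

/-- Transferred `λ4'`. -/
def tl4 : MMap L' L' 4 2 :=
  fc1 2 p (fc4 2 A.l4 i i i i)
  - fc1 2 p (fc4 2
      (pc 2 0 1 A.l2 (hl3 A h)
        + (pc 2 1 0 A.l2 (hl3 A h) - pa (P12 4) (pc 2 1 0 A.l2 (hl3 A h))
            + pa (P123 4) (pc 2 1 0 A.l2 (hl3 A h)))
        + pc 2 0 2 A.l3 (hl2 A h)
        - (pc 2 1 1 A.l3 (hl2 A h) - pa (P12 4) (pc 2 1 1 A.l3 (hl2 A h)))
        + (pc 2 2 0 A.l3 (hl2 A h) - pa (P23 4) (pc 2 2 0 A.l3 (hl2 A h))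
            + pa (P132 4) (pc 2 2 0 A.l3 (hl2 A h)))) i i i i)
  - fc1 2 p (fc4 2
      (pc 2 0 2 (pc 1 0 1 A.l2 (hl2 A h)) (hl2 A h)
        - (pc 2 1 1 (pc 1 0 1 A.l2 (hl2 A h)) (hl2 A h)
            - pa (P12 4) (pc 2 1 1 (pc 1 0 1 A.l2 (hl2 A h)) (hl2 A h)))
        + (fc2 2 A.l2 (hl2 A h) (hl2 A h) - pa (P23 4) (fc2 2 A.l2 (hl2 A h) (hl2 A h))
            + pa (P132 4) (fc2 2 A.l2 (hl2 A h) (hl2 A h)))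
        + (pc 2 1 1 (pc 1 1 0 A.l2 (hl2 A h)) (hl2 A h)
            - pa (P12 4) (pc 2 1 1 (pc 1 1 0 A.l2 (hl2 A h)) (hl2 A h))
            + pa (P123 4) (pc 2 1 1 (pc 1 1 0 A.l2 (hl2 A h)) (hl2 A h)))
        - (pc 2 2 0 (pc 1 1 0 A.l2 (hl2 A h)) (hl2 A h)
            - pa (P12 4) (pc 2 2 0 (pc 1 1 0 A.l2 (hl2 A h)) (hl2 A h))
            + pa (P123 4) (pc 2 2 0 (pc 1 1 0 A.l2 (hl2 A h)) (hl2 A h))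
            - pa (P23 4) (pc 2 2 0 (pc 1 1 0 A.l2 (hl2 A h)) (hl2 A h))
            + pa (P132 4) (pc 2 2 0 (pc 1 1 0 A.l2 (hl2 A h)) (hl2 A h))
            - pa (P13 4) (pc 2 2 0 (pc 1 1 0 A.l2 (hl2 A h)) (hl2 A h)))) i i i i)

/-- Transferred `λ21' = p ∘ λ21 ∘ (i,i)`. -/
def tl21 : MMap L' L' 2 1 := fc1 1 p (fc2 1 A.l21 i i)

/-- Transferred `λ211' = p ∘ λ211 ∘ (i,i)`. -/
def tl211 : MMap L' L' 2 2 := fc1 2 p (fc2 2 A.l211 i i)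

/-- Transferred `λ31'`. -/
def tl31 : MMap L' L' 3 2 :=
  fc1 2 p (fc3 2 A.l31 i i i) - fc1 2 p (fc3 2 (pc 2 0 1 A.l2 (hl21 A h)) i i i)

/-- Transferred `λ32'`. -/
def tl32 : MMap L' L' 3 2 :=
  fc1 2 p (fc3 2 A.l32 i i i)
  + fc1 2 p (fc3 2 (pc 2 0 1 A.l21 (hl2 A h) + pc 2 1 0 A.l2 (hl21 A h)
      + pa (P12 3) (pc 2 1 0 A.l21 (hl2 A h))) i i i)

/-- Extension of `i`: `i₂ = -h ∘ λ2 ∘ (i,i)`. -/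
def ti2 : MMap L' L 2 1 := - fc1 1 h (fc2 0 A.l2 i i)

/-- Extension of `i`: `i₂₁ = -h ∘ λ21 ∘ (i,i)`. -/
def ti21 : MMap L' L 2 2 := - fc1 2 h (fc2 1 A.l21 i i)

/-- Extension of `i`: `i₃`. -/
def ti3 : MMap L' L 3 2 :=
  - fc1 2 h (fc3 1 A.l3 i i i)
  - fc1 2 h (fc3 1 (pc 1 0 1 A.l2 (hl2 A h)
      - (pc 1 1 0 A.l2 (hl2 A h) - pa (P12 3) (pc 1 1 0 A.l2 (hl2 A h)))) i i i)

end Transfer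

section Skew

variable (k : Type) [CommRing k] [Invertible (2 : k)] [Invertible (3 : k)]
variable {L M : ℤ → Type} [∀ i, AddCommGroup (L i)] [∀ i, Module k (L i)]
  [∀ i, AddCommGroup (M i)] [∀ i, Module k (M i)]

/-- Skew-symmetrization `λ̄2` of a weak Lie 3-algebra. -/
def skew2 (A : WeakLie3 k L) : MMap L L 2 0 :=
  (⅟ (2 : k)) • ∑ σ : Equiv.Perm (Fin 2), (Equiv.Perm.sign σ : ℤ) • pa σ A.l2

/-- Skew-symmetrization `λ̄3` of a weak Lie 3-algebra. -/
def skew3 (A : WeakLie3 k L) : MMap L L 3 1 :=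
  (⅟ (2 : k) * ⅟ (3 : k)) • ∑ σ : Equiv.Perm (Fin 3), (Equiv.Perm.sign σ : ℤ) • pa σ A.l3
  - (⅟ (2 : k) * ⅟ (2 : k) * ⅟ (2 : k) * ⅟ (3 : k)) •
      ∑ σ : Equiv.Perm (Fin 3), (Equiv.Perm.sign σ : ℤ) •
        pa σ (pc 1 0 1 A.l21 A.l2 + pc 1 1 0 A.l21 A.l2)

/-- Skew-symmetrization `λ̄4` of a weak Lie 3-algebra. -/
def skew4 (A : WeakLie3 k L) : MMap L L 4 2 :=
  (⅟ (2 : k) * ⅟ (2 : k) * ⅟ (2 : k) * ⅟ (3 : k)) •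
      ∑ σ : Equiv.Perm (Fin 4), (Equiv.Perm.sign σ : ℤ) • pa σ A.l4
  + (⅟ (2 : k) * ⅟ (2 : k) * ⅟ (2 : k) * ⅟ (2 : k) * ⅟ (3 : k)) •
      ∑ σ : Equiv.Perm (Fin 4), (Equiv.Perm.sign σ : ℤ) •
        pa σ (pc 2 0 1 A.l21 A.l3 - pc 2 0 2 A.l31 A.l2 + pc 2 1 1 A.l32 A.l2
          - pc 2 1 0 A.l21 A.l3 - pc 2 1 1 A.l31 A.l2 + pc 2 2 0 A.l32 A.l2)

/-- Skew-symmetrization `f̄2` of the second component of a weak morphism. -/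
def skewMor2 (f2 : MMap L M 2 1) : MMap L M 2 1 :=
  (⅟ (2 : k)) • ∑ σ : Equiv.Perm (Fin 2), (Equiv.Perm.sign σ : ℤ) • pa σ f2

/-- Skew-symmetrization `f̄3` of the third component of a weak morphism `A → B`. -/
def skewMor3 (A : WeakLie3 k L) (B : WeakLie3 k M) (f1 : MMap L M 1 0) (f2 : MMap L M 2 1)
    (f21 : MMap L M 2 2) (f3 : MMap L M 3 2) : MMap L M 3 2 :=
  (⅟ (2 : k) * ⅟ (3 : k)) • ∑ σ : Equiv.Perm (Fin 3), (Equiv.Perm.sign σ : ℤ) • pa σ f3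
  - (⅟ (2 : k) * ⅟ (2 : k) * ⅟ (2 : k) * ⅟ (3 : k)) •
      ∑ σ : Equiv.Perm (Fin 3), (Equiv.Perm.sign σ : ℤ) •
        pa σ (pc 2 0 1 f21 A.l2 + pc 2 1 0 f21 A.l2
          - fc2 2 B.l21 f2 f1 - fc2 2 B.l21 f1 f2)

end Skew

section Comp

variable {k : Type} [CommRing k] {L M N : ℤ → Type}
  [∀ i, AddCommGroup (L i)] [∀ i, Module k (L i)]
  [∀ i, AddCommGroup (M i)] [∀ i, Module k (M i)]
  [∀ i, AddCommGroup (N i)] [∀ i, Module k (N i)]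

/-- First component of the composition of weak morphisms. -/
def cmp1 (f1' : MMap M N 1 0) (f1 : MMap L M 1 0) : MMap L N 1 0 := fc1 0 f1' f1

/-- Second component of the composition of weak morphisms. -/
def cmp2 (f1' : MMap M N 1 0) (f2' : MMap M N 2 1) (f1 : MMap L M 1 0) (f2 : MMap L M 2 1) :
    MMap L N 2 1 := fc2 1 f2' f1 f1 + fc1 1 f1' f2

/-- `(f'∘f)21` component of the composition of weak morphisms. -/
def cmp21 (f1' : MMap M N 1 0) (f21' : MMap M N 2 2) (f1 : MMap L M 1 0)
    (f21 : MMap L M 2 2) : MMap L N 2 2 := fc2 2 f21' f1 f1 + fc1 2 f1' f21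

/-- Third component of the composition of weak morphisms. -/
def cmp3 (f1' : MMap M N 1 0) (f2' : MMap M N 2 1) (f3' : MMap M N 3 2)
    (f1 : MMap L M 1 0) (f2 : MMap L M 2 1) (f3 : MMap L M 3 2) : MMap L N 3 2 :=
  fc3 2 f3' f1 f1 f1 - fc2 2 f2' f2 f1 + fc2 2 f2' f1 f2 - pa (P12 3) (fc2 2 f2' f1 f2)
    + fc1 2 f1' f3

end Comp

end WL3
namespace WL3

/-! ## The 3-term complex associated to a CLWX 2-algebroid -/

/-- The graded object with `E0` in degree 0, `E1` in degree 1, `R` in degree 2. -/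
def cl (R E0 E1 : Type) : ℤ → Type
  | .ofNat 0 => E0
  | .ofNat 1 => E1
  | .ofNat 2 => R
  | .ofNat (_ + 3) => PUnit
  | .negSucc _ => PUnit

section clinst
variable (R E0 E1 : Type) [AddCommGroup R] [AddCommGroup E0] [AddCommGroup E1]

instance clACG : ∀ i : ℤ, AddCommGroup (cl R E0 E1 i)
  | .ofNat 0 => inferInstanceAs (AddCommGroup E0)
  | .ofNat 1 => inferInstanceAs (AddCommGroup E1)
  | .ofNat 2 => inferInstanceAs (AddCommGroup R)
  | .ofNat (_ + 3) => inferInstanceAs (AddCommGroup PUnit)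
  | .negSucc _ => inferInstanceAs (AddCommGroup PUnit)

variable (k : Type) [CommRing k] [Module k R] [Module k E0] [Module k E1]

instance clMod : ∀ i : ℤ, Module k (cl R E0 E1 i)
  | .ofNat 0 => inferInstanceAs (Module k E0)
  | .ofNat 1 => inferInstanceAs (Module k E1)
  | .ofNat 2 => inferInstanceAs (Module k R)
  | .ofNat (_ + 3) => inferInstanceAs (Module k PUnit)
  | .negSucc _ => inferInstanceAs (Module k PUnit)

end clinst

section clmaps
variable {R E0 E1 : Type}

def getE0 {i : ℤ} (h : i = 0) (v : cl R E0 E1 i) : E0 := by subst h; exact v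
def getE1 {i : ℤ} (h : i = 1) (v : cl R E0 E1 i) : E1 := by subst h; exact v
def getR {i : ℤ} (h : i = 2) (v : cl R E0 E1 i) : R := by subst h; exact v
def put0 {i : ℤ} (h : i = 0) (v : E0) : cl R E0 E1 i := by subst h; exact v
def put1 {i : ℤ} (h : i = 1) (v : E1) : cl R E0 E1 i := by subst h; exact v
def put2 {i : ℤ} (h : i = 2) (v : R) : cl R E0 E1 i := by subst h; exact v

variable [AddCommGroup R] [AddCommGroup E0] [AddCommGroup E1]
variable (k : Type) [CommRing k] [Module k R] [Module k E0] [Module k E1]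

/-- The differential of the complex `E0 ← E1 ← R` as an `MMap`, from `∂` and `D`. -/
def mkD (pd : E1 → E0) (Dm : R → E1) : MMap (cl R E0 E1) (cl R E0 E1) 1 (-1) :=
  fun d x =>
    if h1 : d 0 = 1 then
      put0 (by rw [Fin.sum_univ_one, h1]; norm_num) (pd (getE1 h1 (x 0)))
    else if h2 : d 0 = 2 then
      put1 (by rw [Fin.sum_univ_one, h2]; norm_num) (Dm (getR h2 (x 0)))
    else 0

/-- `λ2` built from `∘` (its components `c00, c01, c10`) and `λ2(x,f) = S(x,Df)`. -/
def mkl2 (c00 : E0 → E0 → E0) (c01 : E0 → E1 → E1) (c10 : E1 → E0 → E1)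
    (S : E0 → E1 → R) (Dm : R → E1) : MMap (cl R E0 E1) (cl R E0 E1) 2 0 :=
  fun d x =>
    if h : d 0 = 0 ∧ d 1 = 0 then
      put0 (by rw [Fin.sum_univ_two, h.1, h.2]; norm_num)
        (c00 (getE0 h.1 (x 0)) (getE0 h.2 (x 1)))
    else if h : d 0 = 0 ∧ d 1 = 1 then
      put1 (by rw [Fin.sum_univ_two, h.1, h.2]; norm_num)
        (c01 (getE0 h.1 (x 0)) (getE1 h.2 (x 1)))
    else if h : d 0 = 1 ∧ d 1 = 0 then
      put1 (by rw [Fin.sum_univ_two, h.1, h.2]; norm_num)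
        (c10 (getE1 h.1 (x 0)) (getE0 h.2 (x 1)))
    else if h : d 0 = 0 ∧ d 1 = 2 then
      put2 (by rw [Fin.sum_univ_two, h.1, h.2]; norm_num)
        (S (getE0 h.1 (x 0)) (Dm (getR h.2 (x 1))))
    else 0

/-- `λ21` built from the pairing `S` (symmetrically on `E0 ⊗ E1` and `E1 ⊗ E0`). -/
def mkl21 (S : E0 → E1 → R) : MMap (cl R E0 E1) (cl R E0 E1) 2 1 :=
  fun d x =>
    if h : d 0 = 0 ∧ d 1 = 1 then
      put2 (by rw [Fin.sum_univ_two, h.1, h.2]; norm_num)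
        (S (getE0 h.1 (x 0)) (getE1 h.2 (x 1)))
    else if h : d 0 = 1 ∧ d 1 = 0 then
      put2 (by rw [Fin.sum_univ_two, h.1, h.2]; norm_num)
        (S (getE0 h.2 (x 1)) (getE1 h.1 (x 0)))
    else 0

/-- `λ3` built from `Ω` on `E0 ⊗ E0 ⊗ E0`. -/
def mkl3 (Om : E0 → E0 → E0 → E1) : MMap (cl R E0 E1) (cl R E0 E1) 3 1 :=
  fun d x =>
    if h : d 0 = 0 ∧ d 1 = 0 ∧ d 2 = 0 then
      put1 (by rw [Fin.sum_univ_three, h.1, h.2.1, h.2.2]; norm_num)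
        (Om (getE0 h.1 (x 0)) (getE0 h.2.1 (x 1)) (getE0 h.2.2 (x 2)))
    else 0

end clmaps

end WL3

namespace WL3

/-! ## Totalization of the graded object -/

section Totalization

variable (k : Type) {R E0 E1 : Type} [CommRing k] [AddCommGroup R] [AddCommGroup E0]
  [AddCommGroup E1] [Module k R] [Module k E0] [Module k E1]

/-- The inclusion of the degree `i` part of `cl R E0 E1` into the total module. -/
def tot : ∀ i : ℤ, cl R E0 E1 i →ₗ[k] E0 × E1 × R
  | .ofNat 0 => LinearMap.inl k E0 (E1 × R)
  | .ofNat 1 => LinearMap.inr k E0 (E1 × R) ∘ₗ LinearMap.inl k E1 R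
  | .ofNat 2 => LinearMap.inr k E0 (E1 × R) ∘ₗ LinearMap.inr k E1 R
  | .ofNat (_ + 3) => 0
  | .negSucc _ => 0

theorem tot_injective (i : ℤ) : Function.Injective (tot k (R := R) (E0 := E0) (E1 := E1) i) := by
  intro v w h
  match i, v, w, h with
  | .ofNat 0, v, w, h => exact congrArg Prod.fst h
  | .ofNat 1, v, w, h => exact congrArg (fun t => t.2.1) h
  | .ofNat 2, v, w, h => exact congrArg (fun t => t.2.2) h
  | .ofNat (_ + 3), _, _, _ => rfl
  | .negSucc _, _, _, _ => rfl

theorem tot_gcast {i j : ℤ} (h : i = j) (v : cl R E0 E1 i) : tot k j (gcast h v) = tot k i v := by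
  subst h; rfl

theorem tot_fst {i : ℤ} (h : i ≠ 0) (v : cl R E0 E1 i) : (tot k i v).1 = 0 := by
  match i, v, h with
  | .ofNat 0, _, h => exact absurd rfl h
  | .ofNat 1, _, _ => rfl
  | .ofNat 2, _, _ => rfl
  | .ofNat (_ + 3), _, _ => rfl
  | .negSucc _, _, _ => rfl

theorem tot_snd {i : ℤ} (h : i ≠ 1) (v : cl R E0 E1 i) : (tot k i v).2.1 = 0 := by
  match i, v, h with
  | .ofNat 0, _, _ => rfl
  | .ofNat 1, _, h => exact absurd rfl h
  | .ofNat 2, _, _ => rfl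
  | .ofNat (_ + 3), _, _ => rfl
  | .negSucc _, _, _ => rfl

theorem tot_trd {i : ℤ} (h : i ≠ 2) (v : cl R E0 E1 i) : (tot k i v).2.2 = 0 := by
  match i, v, h with
  | .ofNat 0, _, _ => rfl
  | .ofNat 1, _, _ => rfl
  | .ofNat 2, _, h => exact absurd rfl h
  | .ofNat (_ + 3), _, _ => rfl
  | .negSucc _, _, _ => rfl

@[simp] theorem tot_put0 {i : ℤ} (h : i = 0) (v : E0) :
    tot k i (put0 (R := R) (E1 := E1) h v) = (v, 0, 0) := by subst h; rfl

@[simp] theorem tot_put1 {i : ℤ} (h : i = 1) (v : E1) :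
    tot k i (put1 (R := R) (E0 := E0) h v) = (0, v, 0) := by subst h; rfl

@[simp] theorem tot_put2 {i : ℤ} (h : i = 2) (v : R) :
    tot k i (put2 (E0 := E0) (E1 := E1) h v) = (0, 0, v) := by subst h; rfl

theorem getE0_eq {i : ℤ} (h : i = 0) (v : cl R E0 E1 i) : getE0 h v = (tot k i v).1 := by
  subst h; rfl

theorem getE1_eq {i : ℤ} (h : i = 1) (v : cl R E0 E1 i) : getE1 h v = (tot k i v).2.1 := by
  subst h; rfl

theorem getR_eq {i : ℤ} (h : i = 2) (v : cl R E0 E1 i) : getR h v = (tot k i v).2.2 := by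
  subst h; rfl

end Totalization

/-! ## Total maps -/

section TotalMaps

variable {E0 V : Type} [AddCommGroup E0] [AddCommGroup V]

/-- Conditions on a map on the total module under which the Koszul signs of its permutations and
insertions are irrelevant: it vanishes as soon as two inputs have positive degree. -/
structure Admissible {m : ℕ} (F : (Fin m → E0 × V) → E0 × V) : Prop where
  zero : ∀ t i, t i = 0 → F t = 0
  fst : ∀ t i, (t i).1 = 0 → (F t).1 = 0
  two : ∀ t i j, i ≠ j → (t i).1 = 0 → (t j).1 = 0 → F t = 0

/-- The tuple obtained from `t` by applying `G` to the block of `n` entries following the first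
`m₁` ones. -/
def insertBlock {T : Type} (m₁ m₂ : ℕ) {n : ℕ} (G : (Fin n → T) → T) (t : Fin (m₁ + n + m₂) → T) :
    Fin (m₁ + 1 + m₂) → T :=
  Fin.append
    (Fin.append (fun j : Fin m₁ => t (Fin.castAdd m₂ (Fin.castAdd n j)))
      (fun _ : Fin 1 => G (fun j => t (Fin.castAdd m₂ (Fin.natAdd m₁ j)))))
    (fun j : Fin m₂ => t (Fin.natAdd (m₁ + n) j))

namespace Admissible

theorem zero_fun {m : ℕ} : Admissible (fun _ : Fin m → E0 × V => 0) :=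
  ⟨fun _ _ _ => rfl, fun _ _ _ => rfl, fun _ _ _ _ _ _ => rfl⟩

theorem add {m : ℕ} {F G : (Fin m → E0 × V) → E0 × V} (hF : Admissible F) (hG : Admissible G) :
    Admissible (fun t => F t + G t) where
  zero t i h := by simp [hF.zero t i h, hG.zero t i h]
  fst t i h := by simp [hF.fst t i h, hG.fst t i h]
  two t i j hij h h' := by simp [hF.two t i j hij h h', hG.two t i j hij h h']

theorem sub {m : ℕ} {F G : (Fin m → E0 × V) → E0 × V} (hF : Admissible F) (hG : Admissible G) :
    Admissible (fun t => F t - G t) where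
  zero t i h := by simp [hF.zero t i h, hG.zero t i h]
  fst t i h := by simp [hF.fst t i h, hG.fst t i h]
  two t i j hij h h' := by simp [hF.two t i j hij h h', hG.two t i j hij h h']

theorem smul {S : Type} [Monoid S] [DistribMulAction S E0] [DistribMulAction S V] (c : S)
    {m : ℕ} {F : (Fin m → E0 × V) → E0 × V} (hF : Admissible F) :
    Admissible (fun t => c • F t) where
  zero t i h := by simp [hF.zero t i h]
  fst t i h := by simp [hF.fst t i h]
  two t i j hij h h' := by simp [hF.two t i j hij h h']

theorem sum {ι : Type} (s : Finset ι) {m : ℕ} {F : ι → (Fin m → E0 × V) → E0 × V}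
    (hF : ∀ a, Admissible (F a)) : Admissible (fun t => ∑ a ∈ s, F a t) where
  zero t i h := Finset.sum_eq_zero fun a _ => (hF a).zero t i h
  fst t i h := by
    rw [Prod.fst_sum]
    exact Finset.sum_eq_zero fun a _ => (hF a).fst t i h
  two t i j hij h h' := Finset.sum_eq_zero fun a _ => (hF a).two t i j hij h h'

theorem perm {m : ℕ} {F : (Fin m → E0 × V) → E0 × V} (hF : Admissible F)
    (σ : Equiv.Perm (Fin m)) : Admissible (fun t => F (fun j => t (σ.symm j))) where
  zero t i h := hF.zero _ (σ i) (by simpa using h)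
  fst t i h := hF.fst _ (σ i) (by simpa using h)
  two t i j hij h h' :=
    hF.two _ (σ i) (σ j) (by simpa using hij) (by simpa using h) (by simpa using h')

/-- The slot of the outer map which receives the `i`-th input of an insertion. -/
def slot (m₁ m₂ n : ℕ) (i : Fin (m₁ + n + m₂)) : Fin (m₁ + 1 + m₂) :=
  Fin.addCases (fun i' => Fin.castAdd m₂ (Fin.addCases (fun a => Fin.castAdd 1 a)
    (fun _ => Fin.natAdd m₁ 0) i')) (fun c => Fin.natAdd (m₁ + 1) c) i

theorem insertBlock {m₁ m₂ n : ℕ} {F : (Fin (m₁ + 1 + m₂) → E0 × V) → E0 × V}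
    {G : (Fin n → E0 × V) → E0 × V} (hF : Admissible F) (hG : Admissible G) :
    Admissible (fun t => F (WL3.insertBlock m₁ m₂ G t)) where
  zero t i h := by
    refine hF.zero _ (slot m₁ m₂ n i) ?_
    induction i using Fin.addCases with
    | left i =>
      induction i using Fin.addCases with
      | left i => simpa [slot, WL3.insertBlock] using h
      | right i => simpa [slot, WL3.insertBlock] using hG.zero _ i h
    | right i => simpa [slot, WL3.insertBlock] using h
  fst t i h := by
    refine hF.fst _ (slot m₁ m₂ n i) ?_
    induction i using Fin.addCases with
    | left i =>
      induction i using Fin.addCases with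
      | left i => simpa [slot, WL3.insertBlock] using h
      | right i => simpa [slot, WL3.insertBlock] using hG.fst _ i h
    | right i => simpa [slot, WL3.insertBlock] using h
  two t i j hij h h' := by
    have key : ∀ i, (t i).1 = 0 → (WL3.insertBlock m₁ m₂ G t (slot m₁ m₂ n i)).1 = 0 := by
      intro i h
      induction i using Fin.addCases with
      | left i =>
        induction i using Fin.addCases with
        | left i => simpa [slot, WL3.insertBlock] using h
        | right i => simpa [slot, WL3.insertBlock] using hG.fst _ i h
      | right i => simpa [slot, WL3.insertBlock] using h
    by_cases hs : slot m₁ m₂ n i = slot m₁ m₂ n j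
    · refine hF.zero _ (slot m₁ m₂ n i) ?_
      induction i using Fin.addCases with
      | left i =>
        induction i using Fin.addCases with
        | left i =>
          induction j using Fin.addCases with
          | left j =>
            induction j using Fin.addCases with
            | left j =>
              simp [slot] at hs
              exact absurd (by rw [hs]) hij
            | right j => simp [slot, Fin.ext_iff] at hs; omega
          | right j => simp [slot, Fin.ext_iff] at hs; omega
        | right i =>
          induction j using Fin.addCases with
          | left j =>
            induction j using Fin.addCases with
            | left j => simp [slot, Fin.ext_iff] at hs; omega
            | right j =>
              have hij' : i ≠ j := fun e => hij (by rw [e])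
              simpa [slot, WL3.insertBlock] using hG.two _ i j hij' h h'
          | right j => simp [slot, Fin.ext_iff] at hs; omega
      | right i =>
        induction j using Fin.addCases with
        | left j =>
          induction j using Fin.addCases with
          | left j => simp [slot, Fin.ext_iff] at hs; omega
          | right j => simp [slot, Fin.ext_iff] at hs; omega
        | right j =>
          simp [slot, Fin.ext_iff] at hs
          exact absurd (by rw [Fin.ext hs]) hij
    · exact hF.two _ _ _ hs (key i h) (key j h')

end Admissible

/-- A map which changes sign under adjacent transpositions is skew-symmetric. -/
theorem comp_perm_of_swap {T W : Type} [AddCommGroup W] {n : ℕ} {F : (Fin (n + 1) → T) → W}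
    (h : ∀ (t : Fin (n + 1) → T) (i : Fin n),
      F (fun j => t (Equiv.swap i.castSucc i.succ j)) = - F t)
    (σ : Equiv.Perm (Fin (n + 1))) (t : Fin (n + 1) → T) :
    F (fun j => t (σ j)) = (Equiv.Perm.sign σ : ℤ) • F t := by
  have hσ : σ ∈ Submonoid.closure
      (Set.range fun i : Fin n => Equiv.swap i.castSucc i.succ) := by
    rw [Equiv.Perm.mclosure_swap_castSucc_succ]; trivial
  induction hσ using Submonoid.closure_induction generalizing t with
  | mem x hx =>
    obtain ⟨i, rfl⟩ := hx
    rw [h, Equiv.Perm.sign_swap (Fin.castSucc_lt_succ).ne]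
    simp
  | one => simp
  | mul x y _ _ hx hy =>
    have := hy (fun j => t (x j))
    simp only [Equiv.Perm.mul_apply]
    rw [this, hx]
    simp [smul_smul, mul_comm]

end TotalMaps

/-! ## Representing graded maps by total maps -/

section Representation

variable (k : Type) {R E0 E1 : Type} [CommRing k] [AddCommGroup R] [AddCommGroup E0]
  [AddCommGroup E1] [Module k R] [Module k E0] [Module k E1]

/-- `F` computes `μ` on homogeneous inputs. -/
def Represents {m : ℕ} {r : ℤ} (μ : MMap (cl R E0 E1) (cl R E0 E1) m r)
    (F : (Fin m → E0 × E1 × R) → E0 × E1 × R) : Prop :=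
  ∀ d x, tot k _ (μ d x) = F (fun j => tot k _ (x j))

/-- `F` computes `μ` on homogeneous inputs and is admissible. -/
structure AdmRep {m : ℕ} {r : ℤ} (μ : MMap (cl R E0 E1) (cl R E0 E1) m r)
    (F : (Fin m → E0 × E1 × R) → E0 × E1 × R) : Prop where
  eval : Represents k μ F
  adm : Admissible F

variable {k}

theorem Represents.eq {m : ℕ} {r : ℤ} {μ ν : MMap (cl R E0 E1) (cl R E0 E1) m r}
    {F G : (Fin m → E0 × E1 × R) → E0 × E1 × R} (hμ : Represents k μ F) (hν : Represents k ν G)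
    (h : ∀ t, F t = G t) : μ = ν := by
  funext d x
  apply tot_injective k
  rw [hμ, hν, h]

theorem Represents.isMultilinear {m : ℕ} {r : ℤ} {μ : MMap (cl R E0 E1) (cl R E0 E1) m r}
    {F : (Fin m → E0 × E1 × R) → E0 × E1 × R} (hμ : Represents k μ F)
    (hadd : ∀ t i u v, F (Function.update t i (u + v))
      = F (Function.update t i u) + F (Function.update t i v))
    (hsmul : ∀ t i (c : k) u, F (Function.update t i (c • u)) = c • F (Function.update t i u)) :
    IsMultilinear k μ := by
  intro d x j
  have hup : ∀ v, (fun i => tot k _ (Function.update x j v i))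
      = Function.update (fun i => tot k _ (x i)) j (tot k _ v) := by
    intro v
    funext i
    exact Function.apply_update (fun i => tot k (d i)) x j v i
  refine ⟨fun a b => tot_injective k _ ?_, fun c a => tot_injective k _ ?_⟩
  · rw [map_add, hμ, hμ, hμ, hup, hup, hup, map_add, hadd]
  · rw [map_smul, hμ, hμ, hup, hup, map_smul, hsmul]

/-- The tuples of degrees and of elements of a tuple of elements of `E0`, `E1` and `R`. -/
def hdeg : E0 ⊕ E1 ⊕ R → ℤ
  | .inl _ => 0
  | .inr (.inl _) => 1
  | .inr (.inr _) => 2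

/-- The homogeneous element given by an element of `E0`, `E1` or `R`. -/
def hval : ∀ s : E0 ⊕ E1 ⊕ R, cl R E0 E1 (hdeg s)
  | .inl x => x
  | .inr (.inl a) => a
  | .inr (.inr f) => f

/-- The element of the total module given by an element of `E0`, `E1` or `R`. -/
def htot : E0 ⊕ E1 ⊕ R → E0 × E1 × R
  | .inl x => (x, 0, 0)
  | .inr (.inl a) => (0, a, 0)
  | .inr (.inr f) => (0, 0, f)

theorem tot_hval (s : E0 ⊕ E1 ⊕ R) : tot k _ (hval s) = htot s := by
  match s with
  | .inl _ => rfl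
  | .inr (.inl _) => rfl
  | .inr (.inr _) => rfl

theorem Represents.apply_eq {m : ℕ} {r : ℤ} {μ ν : MMap (cl R E0 E1) (cl R E0 E1) m r}
    {F G : (Fin m → E0 × E1 × R) → E0 × E1 × R} (hμ : Represents k μ F) (hν : Represents k ν G)
    (h : μ = ν) (s : Fin m → E0 ⊕ E1 ⊕ R) : F (fun j => htot (s j)) = G (fun j => htot (s j)) := by
  have h1 := hμ _ (fun j => hval (s j))
  have h2 := hν _ (fun j => hval (s j))
  simp only [tot_hval] at h1 h2
  rw [← h1, ← h2, h]

theorem AdmRep.congr {m : ℕ} {r : ℤ} {μ : MMap (cl R E0 E1) (cl R E0 E1) m r}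
    {F G : (Fin m → E0 × E1 × R) → E0 × E1 × R} (hμ : AdmRep k μ F) (h : ∀ t, F t = G t) :
    AdmRep k μ G := by
  obtain rfl : F = G := funext h
  exact hμ

theorem AdmRep.zero {m : ℕ} {r : ℤ} :
    AdmRep k (0 : MMap (cl R E0 E1) (cl R E0 E1) m r) (fun _ => 0) :=
  ⟨fun _ _ => map_zero _, Admissible.zero_fun⟩

theorem AdmRep.add {m : ℕ} {r : ℤ} {μ ν : MMap (cl R E0 E1) (cl R E0 E1) m r}
    {F G : (Fin m → E0 × E1 × R) → E0 × E1 × R} (hμ : AdmRep k μ F) (hν : AdmRep k ν G) :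
    AdmRep k (μ + ν) (fun t => F t + G t) :=
  ⟨fun d x => by rw [Pi.add_apply, Pi.add_apply, map_add, hμ.eval, hν.eval], hμ.adm.add hν.adm⟩

theorem AdmRep.sub {m : ℕ} {r : ℤ} {μ ν : MMap (cl R E0 E1) (cl R E0 E1) m r}
    {F G : (Fin m → E0 × E1 × R) → E0 × E1 × R} (hμ : AdmRep k μ F) (hν : AdmRep k ν G) :
    AdmRep k (μ - ν) (fun t => F t - G t) :=
  ⟨fun d x => by rw [Pi.sub_apply, Pi.sub_apply, map_sub, hμ.eval, hν.eval], hμ.adm.sub hν.adm⟩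

theorem AdmRep.smul (c : k) {m : ℕ} {r : ℤ} {μ : MMap (cl R E0 E1) (cl R E0 E1) m r}
    {F : (Fin m → E0 × E1 × R) → E0 × E1 × R} (hμ : AdmRep k μ F) :
    AdmRep k (c • μ) (fun t => c • F t) :=
  ⟨fun d x => by rw [Pi.smul_apply, Pi.smul_apply, map_smul, hμ.eval], hμ.adm.smul c⟩

theorem AdmRep.zsmul (c : ℤ) {m : ℕ} {r : ℤ} {μ : MMap (cl R E0 E1) (cl R E0 E1) m r}
    {F : (Fin m → E0 × E1 × R) → E0 × E1 × R} (hμ : AdmRep k μ F) :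
    AdmRep k (c • μ) (fun t => c • F t) :=
  ⟨fun d x => by rw [Pi.smul_apply, Pi.smul_apply, map_zsmul, hμ.eval], hμ.adm.smul c⟩

theorem AdmRep.sum {ι : Type} (s : Finset ι) {m : ℕ} {r : ℤ}
    {μ : ι → MMap (cl R E0 E1) (cl R E0 E1) m r}
    {F : ι → (Fin m → E0 × E1 × R) → E0 × E1 × R} (hμ : ∀ a, AdmRep k (μ a) (F a)) :
    AdmRep k (∑ a ∈ s, μ a) (fun t => ∑ a ∈ s, F a t) :=
  ⟨fun d x => by
    rw [Finset.sum_apply, Finset.sum_apply, map_sum]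
    exact Finset.sum_congr rfl fun a _ => (hμ a).eval d x,
  Admissible.sum s fun a => (hμ a).adm⟩

theorem koszulSign_eq_one {m : ℕ} (d : Fin m → ℤ) (σ : Equiv.Perm (Fin m))
    (h : ∀ i j, i ≠ j → d i * d j = 0) : koszulSign d σ = 1 := by
  refine Finset.prod_eq_one fun p hp => ?_
  rw [h _ _ (Finset.mem_filter.1 hp).2.1.ne]
  rfl

theorem AdmRep.pa {m : ℕ} {r : ℤ} {μ : MMap (cl R E0 E1) (cl R E0 E1) m r}
    {F : (Fin m → E0 × E1 × R) → E0 × E1 × R} (hμ : AdmRep k μ F) (σ : Equiv.Perm (Fin m)) :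
    AdmRep k (pa σ μ) (fun t => F (fun j => t (σ.symm j))) := by
  refine ⟨fun d x => ?_, hμ.adm.perm σ⟩
  simp only [WL3.pa]
  rw [map_zsmul, tot_gcast, hμ.eval]
  by_cases h : ∀ i j, i ≠ j → d i * d j = 0
  · rw [koszulSign_eq_one d σ h, one_smul]
  · push Not at h
    obtain ⟨i, j, hij, h⟩ := h
    rw [(hμ.adm.perm σ).two (fun j => tot k _ (x j)) i j hij
      (tot_fst k (left_ne_zero_of_mul h) _) (tot_fst k (right_ne_zero_of_mul h) _), smul_zero]

theorem tot_pcomp {m₁ m₂ n : ℕ} {r s : ℤ} {μ : MMap (cl R E0 E1) (cl R E0 E1) (m₁ + 1 + m₂) r}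
    {ν : MMap (cl R E0 E1) (cl R E0 E1) n s}
    {F : (Fin (m₁ + 1 + m₂) → E0 × E1 × R) → E0 × E1 × R}
    {G : (Fin n → E0 × E1 × R) → E0 × E1 × R} (hμ : Represents k μ F) (hν : Represents k ν G)
    (d : Fin (m₁ + n + m₂) → ℤ) (x : ∀ j, cl R E0 E1 (d j)) :
    tot k _ (pcomp m₁ m₂ μ ν d x)
      = ((-1 : ℤ) ^ (s * ∑ j : Fin m₁, d (Fin.castAdd m₂ (Fin.castAdd n j))).natAbs) •
        F (insertBlock m₁ m₂ G (fun j => tot k _ (x j))) := by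
  rw [pcomp, map_zsmul, tot_gcast, hμ]
  congr 2
  funext j
  induction j using Fin.addCases with
  | left j =>
    induction j using Fin.addCases with
    | left j => simp [insertBlock, tot_gcast]
    | right j => simp [insertBlock, tot_gcast, hν _ _]
  | right j => simp [insertBlock, tot_gcast]

theorem tot_mcast {m m' : ℕ} {r r' : ℤ} (hm : m = m') (hr : r = r')
    {μ : MMap (cl R E0 E1) (cl R E0 E1) m r} (d : Fin m' → ℤ) (x : ∀ j, cl R E0 E1 (d j)) :
    tot k _ (mcast hm hr μ d x)
      = tot k _ (μ (fun j => d (Fin.cast hm j)) (fun j => x (Fin.cast hm j))) := by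
  subst hm hr; rfl

theorem AdmRep.pc {m₁ m₂ n : ℕ} {Q r s : ℤ} {h : r + s = Q}
    {μ : MMap (cl R E0 E1) (cl R E0 E1) (m₁ + 1 + m₂) r}
    {ν : MMap (cl R E0 E1) (cl R E0 E1) n s}
    {F : (Fin (m₁ + 1 + m₂) → E0 × E1 × R) → E0 × E1 × R}
    {G : (Fin n → E0 × E1 × R) → E0 × E1 × R} (hμ : AdmRep k μ F) (hν : AdmRep k ν G)
    (hs : Even s ∨ ∀ t, (G t).1 = 0) :
    AdmRep k (pc Q m₁ m₂ μ ν h) (fun t => F (insertBlock m₁ m₂ G t)) := by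
  subst h
  refine ⟨fun d x => ?_, hμ.adm.insertBlock hν.adm⟩
  change tot k _ (pcomp m₁ m₂ μ ν d x) = _
  rw [tot_pcomp hμ.eval hν.eval]
  rcases hs with hs | hs
  · rw [Even.neg_one_pow (Int.natAbs_even.2 (hs.mul_right _)), one_smul]
  · by_cases hd : ∀ j : Fin m₁, d (Fin.castAdd m₂ (Fin.castAdd n j)) = 0
    · simp [hd]
    · push Not at hd
      obtain ⟨j, hj⟩ := hd
      rw [hμ.adm.two _ (Fin.castAdd m₂ (Fin.castAdd 1 j)) (Fin.castAdd m₂ (Fin.natAdd m₁ 0)),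
        smul_zero]
      · simp [Fin.ext_iff]; omega
      · simpa [insertBlock] using tot_fst k hj _
      · simpa [insertBlock] using hs _

theorem tot_bd {m : ℕ} {Q r : ℤ} {h : -1 + r = Q} {D : MMap (cl R E0 E1) (cl R E0 E1) 1 (-1)}
    {dT : E0 × E1 × R → E0 × E1 × R} (hD : Represents k D (fun t => dT (t 0)))
    {μ : MMap (cl R E0 E1) (cl R E0 E1) m r}
    {F : (Fin m → E0 × E1 × R) → E0 × E1 × R} (hμ : Represents k μ F)
    (d : Fin m → ℤ) (x : ∀ j, cl R E0 E1 (d j)) :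
    tot k _ (bd Q D D μ h d x) = dT (F (fun j => tot k _ (x j)))
      - ((-1 : ℤ) ^ r.natAbs) • ∑ p : Fin m,
        ((-1 : ℤ) ^ (∑ j : Fin p, d ⟨j, j.2.trans p.2⟩).natAbs) •
          F (Function.update (fun j => tot k _ (x j)) p (dT (tot k _ (x p)))) := by
  subst h
  change tot k _ (bdry D D μ d x) = _
  rw [bdry, Pi.sub_apply, Pi.sub_apply, Pi.smul_apply, Pi.smul_apply, Finset.sum_apply,
    Finset.sum_apply, map_sub, map_zsmul, map_sum, comp₁, tot_gcast, hD, hμ]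
  congr 2
  refine Finset.sum_congr rfl fun p _ => ?_
  have hp : m = p.val + 1 + (m - 1 - p.val) := by have := p.isLt; omega
  have hμ' : Represents k (mcast hp rfl μ) (fun t => F (fun j => t (Fin.cast hp j))) := by
    intro d x
    rw [tot_mcast, hμ]
  rw [tot_mcast, tot_pcomp hμ' hD, neg_one_mul, Int.natAbs_neg]
  congr 2
  funext j
  obtain ⟨i, hi⟩ := p
  obtain ⟨j, hj⟩ := j
  simp only [insertBlock, Fin.cast_mk]
  rcases lt_trichotomy j i with hlt | heq | hgt
  · rw [show (⟨j, hp ▸ hj⟩ : Fin (i + 1 + (m - 1 - i)))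
      = Fin.castAdd _ (Fin.castAdd _ ⟨j, hlt⟩) from rfl, Fin.append_left, Fin.append_left,
      Function.update_of_ne (by simp [Fin.ext_iff, hlt.ne])]
    rfl
  · subst heq
    rw [show (⟨j, hp ▸ hj⟩ : Fin (j + 1 + (m - 1 - j)))
      = Fin.castAdd _ (Fin.natAdd _ 0) from rfl, Fin.append_left, Fin.append_right,
      Function.update_self]
    rfl
  · rw [show (⟨j, hp ▸ hj⟩ : Fin (i + 1 + (m - 1 - i)))
      = Fin.natAdd _ ⟨j - (i + 1), by omega⟩ from by ext; simp; omega, Fin.append_right,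
      Function.update_of_ne (by simp [Fin.ext_iff, hgt.ne'])]
    have hlt : j - (i + 1) < m - 1 - i := by omega
    have hq : Fin.cast hp.symm (Fin.natAdd (i + 1) ⟨j - (i + 1), hlt⟩) = ⟨j, hj⟩ := by
      ext
      change i + 1 + (j - (i + 1)) = j
      omega
    exact congrArg (fun q => tot k _ (x q)) hq

end Representation
/-! ## The brackets on the total module -/

/-- The operations of a CLWX 2-algebroid; the anchor is `ρ x f = S x (D f)`. -/
structure ClwxOps (k R E0 E1 : Type) [Field k] [AddCommGroup R] [AddCommGroup E0]
    [AddCommGroup E1] [Module k R] [Module k E0] [Module k E1] where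
  pd : E1 →ₗ[k] E0
  S : E0 →ₗ[k] E1 →ₗ[k] R
  c00 : E0 →ₗ[k] E0 →ₗ[k] E0
  c01 : E0 →ₗ[k] E1 →ₗ[k] E1
  c10 : E1 →ₗ[k] E0 →ₗ[k] E1
  Om : E0 →ₗ[k] E0 →ₗ[k] E0 →ₗ[k] E1
  Dm : R →ₗ[k] E1

namespace ClwxOps

variable {k R E0 E1 : Type} [Field k] [AddCommGroup R] [AddCommGroup E0]
    [AddCommGroup E1] [Module k R] [Module k E0] [Module k E1] (C : ClwxOps k R E0 E1)

/-- The differential on the total module. -/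
def diff (u : E0 × E1 × R) : E0 × E1 × R := (C.pd u.2.1, C.Dm u.2.2, 0)

/-- The parity involution of the total module. -/
def parity (u : E0 × E1 × R) : E0 × E1 × R := (u.1, - u.2.1, u.2.2)

/-- The product `λ2` on the total module. -/
def prod (u v : E0 × E1 × R) : E0 × E1 × R :=
  (C.c00 u.1 v.1, C.c01 u.1 v.2.1 + C.c10 u.2.1 v.1, C.S u.1 (C.Dm v.2.2))

/-- The pairing `λ21` on the total module. -/
def pairing (u v : E0 × E1 × R) : E0 × E1 × R := (0, 0, C.S u.1 v.2.1 + C.S v.1 u.2.1)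

/-- The map `λ3` on the total module. -/
def omega (u v w : E0 × E1 × R) : E0 × E1 × R := (0, C.Om u.1 v.1 w.1, 0)

/-- The skew-symmetrized product on `E0 × E1`. -/
def act : E0 →ₗ[k] E1 →ₗ[k] E1 := C.c01 - (2 : k)⁻¹ • (C.S.compr₂ C.Dm)

theorem act_apply (x : E0) (a : E1) : C.act x a = C.c01 x a - (2 : k)⁻¹ • C.Dm (C.S x a) := rfl

/-- The skew-symmetrization of `λ2` on the total module. -/
def bracket (u v : E0 × E1 × R) : E0 × E1 × R :=
  (C.c00 u.1 v.1, C.act u.1 v.2.1 - C.act v.1 u.2.1,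
    (2 : k)⁻¹ • C.S u.1 (C.Dm v.2.2) - (2 : k)⁻¹ • C.S v.1 (C.Dm u.2.2))

/-- The component of the skew-symmetrization of `λ3` on `E0 × E0 × E1`. -/
def tau (x y : E0) (a : E1) : R :=
  (4 : k)⁻¹ • (C.S x (C.Dm (C.S y a)) - C.S y (C.Dm (C.S x a))) - (2 : k)⁻¹ • C.S (C.c00 x y) a

/-- The skew-symmetrization of `λ3` on the total module. -/
def triple (u v w : E0 × E1 × R) : E0 × E1 × R :=
  (0, C.Om u.1 v.1 w.1, C.tau u.1 v.1 w.2.1 + C.tau v.1 w.1 u.2.1 + C.tau w.1 u.1 v.2.1)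

/-- The skew-symmetrization of `λ4` on the total module. -/
def quadruple (u v w z : E0 × E1 × R) : E0 × E1 × R := (0, 0, C.S z.1 (C.Om u.1 v.1 w.1))

/-- The identities satisfied by the operations of a CLWX 2-algebroid. -/
structure Laws : Prop where
  c00_skew : ∀ x y, C.c00 x y = - C.c00 y x
  om12 : ∀ x y z, C.Om y x z = - C.Om x y z
  om23 : ∀ x y z, C.Om x z y = - C.Om x y z
  om34 : ∀ x y z w, C.S w (C.Om x y z) = - C.S z (C.Om x y w)
  c10_eq : ∀ x a, C.c10 a x = C.Dm (C.S x a) - C.c01 x a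
  S_pd : ∀ a b, C.S (C.pd a) b = C.S (C.pd b) a
  S_c01 : ∀ x y a, C.S y (C.c01 x a) = C.S x (C.Dm (C.S y a)) - C.S (C.c00 x y) a
  pd_Dm : ∀ f, C.pd (C.Dm f) = 0
  c01_Dm : ∀ x f, C.c01 x (C.Dm f) = C.Dm (C.S x (C.Dm f))
  pd_c01 : ∀ x a, C.pd (C.c01 x a) = C.c00 x (C.pd a)
  c01_pd : ∀ a b, C.c01 (C.pd a) b = C.Dm (C.S (C.pd a) b) - C.c01 (C.pd b) a
  pd_Om : ∀ x y z, C.pd (C.Om x y z)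
    = C.c00 x (C.c00 y z) - C.c00 (C.c00 x y) z - C.c00 y (C.c00 x z)
  Om_pd : ∀ x y a, C.Om x y (C.pd a)
    = C.c01 x (C.c01 y a) - C.c01 (C.c00 x y) a - C.c01 y (C.c01 x a)
  anchor : ∀ x y f, C.S (C.c00 x y) (C.Dm f)
    = C.S x (C.Dm (C.S y (C.Dm f))) - C.S y (C.Dm (C.S x (C.Dm f)))
  c01_Om : ∀ x y z w, C.c10 (C.Om x y z) w + C.c01 x (C.Om y z w) - C.c01 y (C.Om x z w)
    + C.c01 z (C.Om x y w) - C.Om (C.c00 x y) z w + C.Om x (C.c00 y z) w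
    - C.Om y (C.c00 x z) w - C.Om x y (C.c00 z w) + C.Om x z (C.c00 y w)
    - C.Om y z (C.c00 x w) = 0

variable {C}

namespace Laws

variable (h : C.Laws)
include h

theorem S_pd_Dm (a : E1) (f : R) : C.S (C.pd a) (C.Dm f) = 0 := by
  rw [h.S_pd, h.pd_Dm]; simp

theorem om_cycle (x y z : E0) : C.Om y z x = C.Om x y z := by
  rw [h.om23, h.om12]; simp

theorem pd_act (x : E0) (a : E1) : C.pd (C.act x a) = C.c00 x (C.pd a) := by
  rw [act_apply, map_sub, map_smul, h.pd_c01, h.pd_Dm]; simp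

section
variable [CharZero k]

theorem act_Dm (x : E0) (f : R) : C.act x (C.Dm f) = (2 : k)⁻¹ • C.Dm (C.S x (C.Dm f)) := by
  rw [act_apply, h.c01_Dm]
  match_scalars <;> norm_num

theorem act_pd (a b : E1) : C.act (C.pd a) b = - C.act (C.pd b) a := by
  rw [act_apply, act_apply, h.c01_pd, h.S_pd]
  match_scalars <;> norm_num

theorem diff_bracket (u v : E0 × E1 × R) :
    C.diff (C.bracket u v) = C.bracket (C.diff u) v + C.bracket (parity u) (C.diff v) := by
  ext
  · simp [diff, bracket, parity, h.pd_act]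
    rw [h.c00_skew (C.pd u.2.1)]
    abel
  · simp [diff, bracket, parity, h.act_Dm]
    rw [h.act_pd]
    abel
  · simp [diff, bracket, parity, h.S_pd_Dm]

theorem tau_swap (x y : E0) (a : E1) : C.tau y x a = - C.tau x y a := by
  simp only [tau, h.c00_skew y x, map_neg, LinearMap.neg_apply]
  module

theorem tau_pd (x : E0) (a b : E1) : C.tau x (C.pd a) b = - C.tau x (C.pd b) a := by
  have h1 := h.S_c01 x (C.pd a) b
  rw [h.S_pd, h.pd_c01] at h1
  simp only [tau, h.S_pd_Dm, h.S_pd b a]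
  linear_combination (norm := module) (-(2:k)⁻¹) • h1

theorem jacobi_act (x y : E0) (a : E1) :
    C.Dm (C.tau x y a) + C.Om x y (C.pd a)
      = C.act x (C.act y a) - C.act (C.c00 x y) a - C.act y (C.act x a) := by
  simp only [tau, act_apply, map_sub, map_smul, h.c01_Dm, h.Om_pd, h.S_c01, h.c00_skew y x,
    map_neg, LinearMap.neg_apply]
  match_scalars <;> norm_num

theorem diff_triple (u v w : E0 × E1 × R) :
    C.diff (C.triple u v w) + (C.triple (C.diff u) v w + C.triple (parity u) (C.diff v) w
      + C.triple (parity u) (parity v) (C.diff w))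
      = C.bracket u (C.bracket v w) - C.bracket (C.bracket u v) w
        - C.bracket v (C.bracket u w) := by
  have hs := h.c00_skew
  have J := h.jacobi_act
  ext
  · simp [diff, triple, bracket, parity, h.pd_Om]
  · have h1 := J u.1 v.1 w.2.1
    have h2 := J v.1 w.1 u.2.1
    have h3 := J w.1 u.1 v.2.1
    rw [h.om_cycle] at h2
    rw [← h.om_cycle] at h3
    simp [diff, triple, bracket, parity, h.pd_Om]
    rw [hs w.1 u.1] at h3
    simp only [map_neg, LinearMap.neg_apply] at h3
    linear_combination (norm := module) h1 + h2 + h3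
  · have e : ∀ x y f, C.tau x y (C.Dm f) = (4 : k)⁻¹ • C.S x (C.Dm (C.S y (C.Dm f)))
        - (4 : k)⁻¹ • C.S y (C.Dm (C.S x (C.Dm f))) - (2 : k)⁻¹ • C.S (C.c00 x y) (C.Dm f) := by
      intro x y f
      rw [tau]; module
    have h1 := h.tau_pd v.1 u.2.1 w.2.1
    have h2 := h.tau_pd w.1 u.2.1 v.2.1
    have h3 := h.tau_pd u.1 v.2.1 w.2.1
    have h4 := h.tau_swap v.1 (C.pd u.2.1) w.2.1
    have h5 := h.tau_swap w.1 (C.pd v.2.1) u.2.1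
    have h6 := h.tau_swap u.1 (C.pd w.2.1) v.2.1
    have h7 : ∀ x y a, C.tau x y (-a) = - C.tau x y a := by
      intro x y a
      simp only [tau, map_neg]
      module
    simp [diff, triple, bracket, parity, e, h7, h.anchor]
    rw [h4, h5, h6, h1, h2, h3]
    match_scalars <;> norm_num

end
end Laws
end ClwxOps
namespace ClwxOps

variable {k R E0 E1 : Type} [Field k] [AddCommGroup R] [AddCommGroup E0]
    [AddCommGroup E1] [Module k R] [Module k E0] [Module k E1] {C : ClwxOps k R E0 E1}

theorem tau_add_right (x y : E0) (a b : E1) : C.tau x y (a + b) = C.tau x y a + C.tau x y b := by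
  simp only [tau, map_add]
  module

theorem tau_smul_right (c : k) (x y : E0) (a : E1) : C.tau x y (c • a) = c • C.tau x y a := by
  simp only [tau, map_smul]
  module

theorem tau_add_left (x x' y : E0) (a : E1) : C.tau (x + x') y a = C.tau x y a + C.tau x' y a := by
  simp only [tau, map_add, LinearMap.add_apply]
  module

theorem tau_smul_left (c : k) (x y : E0) (a : E1) : C.tau (c • x) y a = c • C.tau x y a := by
  simp only [tau, map_smul, LinearMap.smul_apply]
  module

theorem tau_add_mid (x y y' : E0) (a : E1) : C.tau x (y + y') a = C.tau x y a + C.tau x y' a := by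
  simp only [tau, map_add, LinearMap.add_apply]
  module

theorem tau_smul_mid (c : k) (x y : E0) (a : E1) : C.tau x (c • y) a = c • C.tau x y a := by
  simp only [tau, map_smul, LinearMap.smul_apply]
  module

theorem tau_neg_right (x y : E0) (a : E1) : C.tau x y (-a) = - C.tau x y a := by
  simpa using tau_smul_right (C := C) (-1) x y a

theorem tau_neg_left (x y : E0) (a : E1) : C.tau (-x) y a = - C.tau x y a := by
  simpa using tau_smul_left (C := C) (-1) x y a

theorem tau_neg_mid (x y : E0) (a : E1) : C.tau x (-y) a = - C.tau x y a := by
  simpa using tau_smul_mid (C := C) (-1) x y a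

theorem tau_sub_right (x y : E0) (a b : E1) : C.tau x y (a - b) = C.tau x y a - C.tau x y b := by
  rw [sub_eq_add_neg, tau_add_right, tau_neg_right, ← sub_eq_add_neg]

@[simp] theorem tau_zero_right (x y : E0) : C.tau x y 0 = 0 := by simp [tau]

@[simp] theorem tau_zero_left (y : E0) (a : E1) : C.tau 0 y a = 0 := by simp [tau]

@[simp] theorem tau_zero_mid (x : E0) (a : E1) : C.tau x 0 a = 0 := by simp [tau]

namespace Laws

variable (h : C.Laws)
include h

theorem quadruple_jacobi (a b c d e : E0) :
    C.S a (C.Dm (C.S e (C.Om b c d))) - C.S b (C.Dm (C.S e (C.Om a c d)))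
      + C.S c (C.Dm (C.S e (C.Om a b d))) - C.S d (C.Dm (C.S e (C.Om a b c)))
      + C.S e (C.Dm (C.S d (C.Om a b c)))
      + C.S (C.c00 a b) (C.Om c d e) - C.S (C.c00 a c) (C.Om b d e)
      + C.S (C.c00 a d) (C.Om b c e) - C.S (C.c00 a e) (C.Om b c d)
      + C.S (C.c00 b c) (C.Om a d e) - C.S (C.c00 b d) (C.Om a c e)
      + C.S (C.c00 b e) (C.Om a c d) + C.S (C.c00 c d) (C.Om a b e)
      - C.S (C.c00 c e) (C.Om a b d) + C.S (C.c00 d e) (C.Om a b c) = 0 := by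
  have h1 := congrArg (C.S e) (h.c01_Om a b c d)
  have p1 : ∀ x y z w, C.S z (C.Om w x y) = - C.S w (C.Om x y z) := by
    intro x y z a
    rw [← h.om_cycle, h.om34]
  have p2 : ∀ x y z w, C.S z (C.Om x w y) = C.S w (C.Om x y z) := by
    intro x y z a
    rw [h.om23, map_neg, h.om34, neg_neg]
  have p3 : ∀ x y z w, C.S z (C.Om x y w) = - C.S w (C.Om x y z) :=
    fun x y z a => h.om34 _ _ _ _
  rw [h.c10_eq] at h1
  simp only [map_add, map_sub, map_zero, h.S_c01, p1 c d e (C.c00 a b), p2 a d e (C.c00 b c),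
    p2 b d e (C.c00 a c), p3 a b e (C.c00 c d), p3 a c e (C.c00 b d), p3 b c e (C.c00 a d)] at h1
  linear_combination (norm := module) h1

section
variable [CharZero k]

theorem quadruple_slot (u v w : E0) (a : E1) :
    - C.S (C.pd a) (C.Om u v w)
      = (2 : k)⁻¹ • (C.S u (C.Dm (C.tau v w a)) - C.S v (C.Dm (C.tau u w a))
          + C.S w (C.Dm (C.tau u v a)))
        - C.tau (C.c00 u v) w a - C.tau (C.c00 v w) u a + C.tau (C.c00 u w) v a
        - C.tau u v (C.act w a) + C.tau u w (C.act v a) - C.tau v w (C.act u a) := by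
  rw [h.S_pd, h.pd_Om]
  simp only [tau, act_apply, map_sub, map_smul, h.S_c01, h.anchor, LinearMap.sub_apply,
    h.c00_skew w u, h.c00_skew v u, h.c00_skew w v, map_neg, LinearMap.neg_apply,
    h.c00_skew u (C.c00 _ _), h.c00_skew v (C.c00 _ _), h.c00_skew w (C.c00 _ _)]
  match_scalars <;> norm_num

theorem diff_quadruple (u v w z : E0 × E1 × R) :
    C.diff (C.quadruple u v w z) - (C.quadruple (C.diff u) v w z + C.quadruple u (C.diff v) w z
      + C.quadruple u v (C.diff w) z + C.quadruple u v w (C.diff z))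
      = C.bracket (C.triple u v w) z + C.bracket u (C.triple v w z)
        - C.bracket v (C.triple u w z) + C.bracket w (C.triple u v z)
        - C.triple (C.bracket u v) w z + C.triple u (C.bracket v w) z
        - C.triple v (C.bracket u w) z - C.triple u v (C.bracket w z)
        + C.triple u w (C.bracket v z) - C.triple v w (C.bracket u z) := by
  ext
  · simp [diff, quadruple, bracket, triple]
  · have h1 := h.c01_Om u.1 v.1 w.1 z.1
    rw [h.c10_eq] at h1
    have e1 := h.om34 v.1 w.1 z.1 u.1
    have e2 := h.om34 u.1 w.1 z.1 v.1
    have e3 := h.om34 u.1 v.1 z.1 w.1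
    have e4 := h.om_cycle u.1 v.1 w.1
    have e5 := h.om23 u.1 v.1 w.1
    simp [diff, quadruple, bracket, triple, act_apply, e1, e2, e3, e4, e5]
    linear_combination (norm := module) -h1
  · have t : ∀ x y z a, C.tau x (C.c00 y z) a = - C.tau (C.c00 y z) x a :=
      fun x y z a => h.tau_swap _ _ _
    have p1 : ∀ x y z a, C.S z (C.Om (C.pd a) x y) = - C.S (C.pd a) (C.Om x y z) := by
      intro x y z a
      rw [← h.om_cycle, h.om34]
    have p2 : ∀ x y z a, C.S z (C.Om x (C.pd a) y) = C.S (C.pd a) (C.Om x y z) := by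
      intro x y z a
      rw [h.om23, map_neg, h.om34, neg_neg]
    have p3 : ∀ x y z a, C.S z (C.Om x y (C.pd a)) = - C.S (C.pd a) (C.Om x y z) :=
      fun x y z a => h.om34 _ _ _ _
    have h1 := h.quadruple_slot v.1 w.1 z.1 u.2.1
    have h2 := h.quadruple_slot u.1 w.1 z.1 v.2.1
    have h3 := h.quadruple_slot u.1 v.1 z.1 w.2.1
    have h4 := h.quadruple_slot u.1 v.1 w.1 z.2.1
    simp [diff, quadruple, bracket, triple, t, p1, p2, p3, tau_sub_right,
      h.tau_swap u.1 w.1, h.tau_swap u.1 z.1, h.tau_swap v.1 z.1]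
    linear_combination (norm := module) -h1 + h2 - h3 + h4

theorem quadruple_cocycle (t0 t1 t2 t3 t4 : E0 × E1 × R) :
    (0 : E0 × E1 × R) =
      C.bracket (C.quadruple t0 t1 t2 t3) t4 - C.bracket t0 (C.quadruple t1 t2 t3 t4)
        + C.bracket t1 (C.quadruple t0 t2 t3 t4) - C.bracket t2 (C.quadruple t0 t1 t3 t4)
        + C.bracket t3 (C.quadruple t0 t1 t2 t4)
        + C.triple (C.triple t0 t1 t2) t3 t4 + C.triple t0 (C.triple t1 t2 t3) t4
        - C.triple t1 (C.triple t0 t2 t3) t4 + C.triple t2 (C.triple t0 t1 t3) t4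
        + C.triple t0 t1 (C.triple t2 t3 t4) - C.triple t0 t2 (C.triple t1 t3 t4)
        + C.triple t1 t2 (C.triple t0 t3 t4) + C.triple t0 t3 (C.triple t1 t2 t4)
        - C.triple t1 t3 (C.triple t0 t2 t4) + C.triple t2 t3 (C.triple t0 t1 t4)
        + C.quadruple (C.bracket t0 t1) t2 t3 t4 - C.quadruple t0 (C.bracket t1 t2) t3 t4
        + C.quadruple t1 (C.bracket t0 t2) t3 t4 + C.quadruple t0 t1 (C.bracket t2 t3) t4
        - C.quadruple t0 t2 (C.bracket t1 t3) t4 + C.quadruple t1 t2 (C.bracket t0 t3) t4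
        - C.quadruple t0 t1 t2 (C.bracket t3 t4) + C.quadruple t0 t1 t3 (C.bracket t2 t4)
        - C.quadruple t0 t2 t3 (C.bracket t1 t4) + C.quadruple t1 t2 t3 (C.bracket t0 t4) := by
  ext
  · simp [quadruple, bracket, triple]
  · simp [quadruple, bracket, triple]
  · have h1 := h.quadruple_jacobi t0.1 t1.1 t2.1 t3.1 t4.1
    have p1 : ∀ x y z a b, C.S z (C.Om (C.c00 a b) x y) = - C.S (C.c00 a b) (C.Om x y z) := by
      intro x y z a b
      rw [← h.om_cycle, h.om34]
    have p2 : ∀ x y z a b, C.S z (C.Om x (C.c00 a b) y) = C.S (C.c00 a b) (C.Om x y z) := by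
      intro x y z a b
      rw [h.om23, map_neg, h.om34, neg_neg]
    have q1 : ∀ x y z w, C.S x (C.Om y z w) = - C.S w (C.Om x y z) := by
      intro x y z w
      rw [h.om34, h.om_cycle]
    have q2 : ∀ x y z w, C.S y (C.Om x z w) = C.S w (C.Om x y z) := by
      intro x y z w
      rw [h.om34, h.om23, map_neg, neg_neg]
    have q3 : ∀ x y z w, C.S z (C.Om x y w) = - C.S w (C.Om x y z) :=
      fun x y z w => h.om34 _ _ _ _
    simp [quadruple, bracket, triple, tau, p1, p2, h.om34 _ _ (C.c00 _ _) t4.1,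
      h.c00_skew t4.1, q1 t0.1 t1.1 t2.1 t3.1, q2 t0.1 t1.1 t2.1 t3.1, q3 t0.1 t1.1 t2.1 t3.1,
      q1 t0.1 t1.1 t2.1 t4.1, q2 t0.1 t1.1 t2.1 t4.1, q3 t0.1 t1.1 t2.1 t4.1,
      q1 t0.1 t1.1 t3.1 t4.1, q2 t0.1 t1.1 t3.1 t4.1, q3 t0.1 t1.1 t3.1 t4.1,
      q1 t0.1 t2.1 t3.1 t4.1, q2 t0.1 t2.1 t3.1 t4.1, q3 t0.1 t2.1 t3.1 t4.1,
      q1 t1.1 t2.1 t3.1 t4.1, q2 t1.1 t2.1 t3.1 t4.1, q3 t1.1 t2.1 t3.1 t4.1]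
    linear_combination (norm := skip) (3 / 2 : k) • h1
    match_scalars <;> norm_num

end
end Laws
end ClwxOps
/-! ## The structure maps on the total module -/

section StructureMaps

variable {k R E0 E1 : Type} [Field k] [AddCommGroup R] [AddCommGroup E0]
    [AddCommGroup E1] [Module k R] [Module k E0] [Module k E1] (C : ClwxOps k R E0 E1)

theorem represents_mkD :
    Represents k (mkD (fun a => C.pd a) (fun f => C.Dm f)) (fun t => C.diff (t 0)) := by
  intro d x
  rw [mkD]
  split_ifs with h1 h2
  · simp [getE1_eq k, ClwxOps.diff, tot_trd k (show d 0 ≠ 2 by omega)]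
  · simp [getR_eq k, ClwxOps.diff, tot_snd k h1]
  · simp [Prod.ext_iff, ClwxOps.diff, tot_snd k h1, tot_trd k h2]

theorem admRep_mkl2 :
    AdmRep k (mkl2 (fun x y => C.c00 x y) (fun x a => C.c01 x a) (fun a x => C.c10 a x)
      (fun x a => C.S x a) (fun f => C.Dm f)) (fun t => C.prod (t 0) (t 1)) where
  eval d x := by
    rw [mkl2]
    split_ifs with h1 h2 h3 h4
    · simp [getE0_eq k, ClwxOps.prod, tot_snd k (show d 0 ≠ 1 by omega),
        tot_snd k (show d 1 ≠ 1 by omega), tot_trd k (show d 1 ≠ 2 by omega)]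
    · simp [getE0_eq k, getE1_eq k, ClwxOps.prod, tot_fst k (show d 1 ≠ 0 by omega),
        tot_trd k (show d 1 ≠ 2 by omega)]
    · simp [getE0_eq k, getE1_eq k, ClwxOps.prod, tot_fst k (show d 0 ≠ 0 by omega)]
    · simp [getE0_eq k, getR_eq k, ClwxOps.prod, tot_fst k (show d 1 ≠ 0 by omega),
        tot_snd k (show d 1 ≠ 1 by omega)]
    · rw [map_zero]
      by_cases h : d 0 = 0
      · simp [Prod.ext_iff, ClwxOps.prod, tot_fst k (show d 1 ≠ 0 by omega),
          tot_snd k (show d 1 ≠ 1 by omega), tot_trd k (show d 1 ≠ 2 by omega)]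
      · by_cases h' : d 1 = 0
        · simp [Prod.ext_iff, ClwxOps.prod, tot_fst k h, tot_snd k (show d 0 ≠ 1 by omega)]
        · simp [Prod.ext_iff, ClwxOps.prod, tot_fst k h, tot_fst k h']
  adm := by
    refine ⟨fun t i h => ?_, fun t i h => ?_, fun t i j hij h h' => ?_⟩
    · fin_cases i <;> simp at h <;> simp [Prod.ext_iff, ClwxOps.prod, h]
    · fin_cases i <;> simp at h <;> simp [ClwxOps.prod, h]
    · fin_cases i <;> fin_cases j <;> simp at hij h h' <;> simp [Prod.ext_iff, ClwxOps.prod, h, h']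

theorem admRep_mkl21 :
    AdmRep k (mkl21 (fun x a => C.S x a)) (fun t => C.pairing (t 0) (t 1)) where
  eval d x := by
    rw [mkl21]
    split_ifs with h1 h2
    · simp [getE0_eq k, getE1_eq k, ClwxOps.pairing, tot_fst k (show d 1 ≠ 0 by omega)]
    · simp [getE0_eq k, getE1_eq k, ClwxOps.pairing, tot_fst k (show d 0 ≠ 0 by omega)]
    · rw [map_zero]
      by_cases h : d 0 = 0
      · simp [Prod.ext_iff, ClwxOps.pairing, tot_snd k (show d 0 ≠ 1 by omega),
          tot_snd k (show d 1 ≠ 1 by omega)]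
      · by_cases h' : d 1 = 0
        · simp [Prod.ext_iff, ClwxOps.pairing, tot_fst k h, tot_snd k (show d 0 ≠ 1 by omega)]
        · simp [Prod.ext_iff, ClwxOps.pairing, tot_fst k h, tot_fst k h']
  adm := by
    refine ⟨fun t i h => ?_, fun t i h => rfl, fun t i j hij h h' => ?_⟩
    · fin_cases i <;> simp at h <;> simp [Prod.ext_iff, ClwxOps.pairing, h]
    · fin_cases i <;> fin_cases j <;> simp at hij h h' <;>
        simp [Prod.ext_iff, ClwxOps.pairing, h, h']

theorem omega_eq_zero (t : Fin 3 → E0 × E1 × R) (i : Fin 3) (h : (t i).1 = 0) :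
    C.omega (t 0) (t 1) (t 2) = 0 := by
  fin_cases i <;> simp at h <;> simp [Prod.ext_iff, ClwxOps.omega, h]

theorem admRep_mkl3 :
    AdmRep k (mkl3 (fun x y z => C.Om x y z)) (fun t => C.omega (t 0) (t 1) (t 2)) where
  eval d x := by
    rw [mkl3]
    split_ifs with h
    · simp [getE0_eq k, ClwxOps.omega]
    · rw [map_zero]
      by_cases h0 : d 0 = 0
      · by_cases h1 : d 1 = 0
        · exact (omega_eq_zero C (fun j => tot k _ (x j)) 2 (tot_fst k (by tauto) _)).symm
        · exact (omega_eq_zero C (fun j => tot k _ (x j)) 1 (tot_fst k h1 _)).symm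
      · exact (omega_eq_zero C (fun j => tot k _ (x j)) 0 (tot_fst k h0 _)).symm
  adm := ⟨fun t i h => omega_eq_zero C t i (by rw [h]; rfl), fun _ _ _ => rfl,
    fun t i _ _ h _ => omega_eq_zero C t i h⟩

end StructureMaps
/-! ## Boundaries on the total module -/

section Boundaries

variable {k R E0 E1 : Type} [CommRing k] [AddCommGroup R] [AddCommGroup E0]
    [AddCommGroup E1] [Module k R] [Module k E0] [Module k E1]

theorem parity_tot {i : ℤ} (v : cl R E0 E1 i) :
    ClwxOps.parity (tot k i v) = ((-1 : ℤ) ^ i.natAbs) • tot k i v := by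
  rcases Nat.even_or_odd i.natAbs with h | h
  · have h1 := tot_snd k (i := i) (by rintro rfl; simp at h) v
    simp [h.neg_one_pow, ClwxOps.parity, Prod.ext_iff, h1]
  · have h0 := tot_fst k (i := i) (by rintro rfl; simp at h) v
    have h2 := tot_trd k (i := i) (by rintro rfl; exact absurd h (by decide)) v
    simp [h.neg_one_pow, ClwxOps.parity, Prod.ext_iff, h0, h2]

theorem map_parity_tot {W : Type} [AddCommGroup W] (B : E0 × E1 × R → W)
    (hB : ∀ u, B (-u) = - B u) {i : ℤ} (v : cl R E0 E1 i) :
    B (ClwxOps.parity (tot k i v)) = ((-1 : ℤ) ^ i.natAbs) • B (tot k i v) := by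
  rw [parity_tot]
  rcases neg_one_pow_eq_or ℤ i.natAbs with h | h <;> simp [h, hB]

variable {Q r : ℤ} {h : -1 + r = Q} {D : MMap (cl R E0 E1) (cl R E0 E1) 1 (-1)}
    {dT : E0 × E1 × R → E0 × E1 × R}

theorem Represents.bd_two (hD : Represents k D (fun t => dT (t 0)))
    {μ : MMap (cl R E0 E1) (cl R E0 E1) 2 r} {B : E0 × E1 × R → E0 × E1 × R → E0 × E1 × R}
    (hμ : Represents k μ (fun t => B (t 0) (t 1))) (hB : ∀ u v, B (-u) v = - B u v) :
    Represents k (bd Q D D μ h) (fun t => dT (B (t 0) (t 1)) - ((-1 : ℤ) ^ r.natAbs) •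
      (B (dT (t 0)) (t 1) + B (ClwxOps.parity (t 0)) (dT (t 1)))) := by
  intro d x
  rw [tot_bd hD hμ, Fin.sum_univ_two]
  congr 3
  · simp [Function.update]
  · rw [map_parity_tot (B · _) (hB · _)]
    congr 2
    simp

theorem Represents.bd_three (hD : Represents k D (fun t => dT (t 0)))
    {μ : MMap (cl R E0 E1) (cl R E0 E1) 3 r}
    {T : E0 × E1 × R → E0 × E1 × R → E0 × E1 × R → E0 × E1 × R}
    (hμ : Represents k μ (fun t => T (t 0) (t 1) (t 2))) (hT : ∀ u v w, T (-u) v w = - T u v w)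
    (hT' : ∀ u v w, T u (-v) w = - T u v w) :
    Represents k (bd Q D D μ h) (fun t => dT (T (t 0) (t 1) (t 2)) - ((-1 : ℤ) ^ r.natAbs) •
      (T (dT (t 0)) (t 1) (t 2) + T (ClwxOps.parity (t 0)) (dT (t 1)) (t 2)
        + T (ClwxOps.parity (t 0)) (ClwxOps.parity (t 1)) (dT (t 2)))) := by
  intro d x
  rw [tot_bd hD hμ, Fin.sum_univ_three]
  congr 3
  · congr 1
    · simp [Function.update]
    · rw [map_parity_tot (T · _ _) (hT · _ _)]
      congr 2
      simp
  · rw [map_parity_tot (T · _ _) (hT · _ _), map_parity_tot (T _ · _) (hT' _ · _), smul_smul,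
      ← pow_add]
    congr 1
    have h2 : ∑ j : Fin ((2 : Fin 3) : ℕ), d ⟨j, j.2.trans (2 : Fin 3).2⟩ = d 0 + d 1 :=
      Fin.sum_univ_two (fun j : Fin 2 => d ⟨j, j.2.trans (2 : Fin 3).2⟩)
    rw [h2]
    rw [neg_one_pow_eq_pow_mod_two, neg_one_pow_eq_pow_mod_two (n := _ + _)]
    congr 1
    omega

theorem Represents.bd_of_vanish (hD : Represents k D (fun t => dT (t 0))) {m : ℕ}
    {μ : MMap (cl R E0 E1) (cl R E0 E1) m r} {F : (Fin m → E0 × E1 × R) → E0 × E1 × R}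
    (hμ : Represents k μ F) (hF : ∀ t i, (t i).1 = 0 → F t = 0) :
    Represents k (bd Q D D μ h) (fun t => dT (F t) - ((-1 : ℤ) ^ r.natAbs) •
      ∑ p, F (Function.update t p (dT (t p)))) := by
  intro d x
  rw [tot_bd hD hμ]
  congr 2
  refine Finset.sum_congr rfl fun p _ => ?_
  by_cases hd : ∀ j : Fin p, d ⟨j, j.2.trans p.2⟩ = 0
  · simp [hd]
  · push Not at hd
    obtain ⟨j, hj⟩ := hd
    rw [hF _ ⟨j, j.2.trans p.2⟩, smul_zero]
    rw [Function.update_of_ne (by simp [Fin.ext_iff, j.2.ne])]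
    exact tot_fst k hj _

end Boundaries
/-! ## The Leibniz 3-algebra identities on the total module -/

section Jacobi

variable {k R E0 E1 : Type} [CommRing k] [AddCommGroup R] [AddCommGroup E0]
    [AddCommGroup E1] [Module k R] [Module k E0] [Module k E1]
    {l2 : MMap (cl R E0 E1) (cl R E0 E1) 2 0} {l3 : MMap (cl R E0 E1) (cl R E0 E1) 3 1}
    {l4 : MMap (cl R E0 E1) (cl R E0 E1) 4 2}
    {B : E0 × E1 × R → E0 × E1 × R → E0 × E1 × R}
    {T : E0 × E1 × R → E0 × E1 × R → E0 × E1 × R → E0 × E1 × R}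
    {U : E0 × E1 × R → E0 × E1 × R → E0 × E1 × R → E0 × E1 × R → E0 × E1 × R}

theorem represents_jacobi_two (h2 : AdmRep k l2 (fun t => B (t 0) (t 1))) :
    Represents k (pc 0 1 0 l2 l2 - pc 0 0 1 l2 l2 - pa (P12 3) (pc 0 1 0 l2 l2))
      (fun t : Fin 3 → E0 × E1 × R => B (t 0) (B (t 1) (t 2)) - B (B (t 0) (t 1)) (t 2)
        - B (t 1) (B (t 0) (t 2))) := by
  have e0 : AdmRep k (m := 3) (pc 0 0 1 l2 l2) (fun t => B (B (t 0) (t 1)) (t 2)) :=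
    h2.pc (m₁ := 0) (m₂ := 1) h2 (.inl ⟨0, rfl⟩)
  have e1 : AdmRep k (m := 3) (pc 0 1 0 l2 l2) (fun t => B (t 0) (B (t 1) (t 2))) :=
    h2.pc (m₁ := 1) (m₂ := 0) h2 (.inl ⟨0, rfl⟩)
  exact ((e1.sub e0).sub (e1.pa _)).eval

theorem represents_jacobi_three (h2 : AdmRep k l2 (fun t => B (t 0) (t 1)))
    (h3 : AdmRep k l3 (fun t => T (t 0) (t 1) (t 2))) (hT : ∀ u v w, (T u v w).1 = 0) :
    Represents k (pc 1 0 1 l2 l3 + pc 1 1 0 l2 l3 - pa (P12 4) (pc 1 1 0 l2 l3)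
      + pa (P123 4) (pc 1 1 0 l2 l3) - pc 1 0 2 l3 l2
      + pc 1 1 1 l3 l2 - pa (P12 4) (pc 1 1 1 l3 l2)
      - pc 1 2 0 l3 l2 + pa (P23 4) (pc 1 2 0 l3 l2) - pa (P132 4) (pc 1 2 0 l3 l2))
      (fun t : Fin 4 → E0 × E1 × R =>
        B (T (t 0) (t 1) (t 2)) (t 3) + B (t 0) (T (t 1) (t 2) (t 3))
        - B (t 1) (T (t 0) (t 2) (t 3)) + B (t 2) (T (t 0) (t 1) (t 3))
        - T (B (t 0) (t 1)) (t 2) (t 3) + T (t 0) (B (t 1) (t 2)) (t 3)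
        - T (t 1) (B (t 0) (t 2)) (t 3) - T (t 0) (t 1) (B (t 2) (t 3))
        + T (t 0) (t 2) (B (t 1) (t 3)) - T (t 1) (t 2) (B (t 0) (t 3))) := by
  have e1 : AdmRep k (m := 4) (pc 1 0 1 l2 l3) (fun t => B (T (t 0) (t 1) (t 2)) (t 3)) :=
    h2.pc (m₁ := 0) (m₂ := 1) h3 (.inr fun _ => hT _ _ _)
  have e2 : AdmRep k (m := 4) (pc 1 1 0 l2 l3) (fun t => B (t 0) (T (t 1) (t 2) (t 3))) :=
    h2.pc (m₁ := 1) (m₂ := 0) h3 (.inr fun _ => hT _ _ _)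
  have e3 : AdmRep k (m := 4) (pc 1 0 2 l3 l2) (fun t => T (B (t 0) (t 1)) (t 2) (t 3)) :=
    h3.pc (m₁ := 0) (m₂ := 2) h2 (.inl ⟨0, rfl⟩)
  have e4 : AdmRep k (m := 4) (pc 1 1 1 l3 l2) (fun t => T (t 0) (B (t 1) (t 2)) (t 3)) :=
    h3.pc (m₁ := 1) (m₂ := 1) h2 (.inl ⟨0, rfl⟩)
  have e5 : AdmRep k (m := 4) (pc 1 2 0 l3 l2) (fun t => T (t 0) (t 1) (B (t 2) (t 3))) :=
    h3.pc (m₁ := 2) (m₂ := 0) h2 (.inl ⟨0, rfl⟩)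
  exact (((((((((e1.add e2).sub (e2.pa _)).add (e2.pa _)).sub e3).add e4).sub (e4.pa _)).sub
    e5).add (e5.pa _)).sub (e5.pa _)).eval

theorem represents_jacobi_four (h2 : AdmRep k l2 (fun t => B (t 0) (t 1)))
    (h3 : AdmRep k l3 (fun t => T (t 0) (t 1) (t 2))) (hT : ∀ u v w, (T u v w).1 = 0)
    (h4 : AdmRep k l4 (fun t => U (t 0) (t 1) (t 2) (t 3))) :
    Represents k (pc 2 0 1 l2 l4 - pc 2 1 0 l2 l4 + pa (P12 5) (pc 2 1 0 l2 l4)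
      - pa (P123 5) (pc 2 1 0 l2 l4) + pa (P1234 5) (pc 2 1 0 l2 l4)
      + pc 2 0 2 l3 l3 + pc 2 1 1 l3 l3 - pa (P12 5) (pc 2 1 1 l3 l3)
      + pa (P123 5) (pc 2 1 1 l3 l3) + pc 2 2 0 l3 l3
      - pa (P23 5) (pc 2 2 0 l3 l3) + pa (P132 5) (pc 2 2 0 l3 l3)
      + pa (P234 5) (pc 2 2 0 l3 l3) - pa (P1342 5) (pc 2 2 0 l3 l3)
      + pa (P13P24 5) (pc 2 2 0 l3 l3)
      + pc 2 0 3 l4 l2 - pc 2 1 2 l4 l2 + pa (P12 5) (pc 2 1 2 l4 l2)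
      + pc 2 2 1 l4 l2 - pa (P23 5) (pc 2 2 1 l4 l2) + pa (P132 5) (pc 2 2 1 l4 l2)
      - pc 2 3 0 l4 l2 + pa (P34 5) (pc 2 3 0 l4 l2) - pa (P243 5) (pc 2 3 0 l4 l2)
      + pa (P1432 5) (pc 2 3 0 l4 l2))
      (fun t : Fin 5 → E0 × E1 × R =>
        B (U (t 0) (t 1) (t 2) (t 3)) (t 4) - B (t 0) (U (t 1) (t 2) (t 3) (t 4))
        + B (t 1) (U (t 0) (t 2) (t 3) (t 4)) - B (t 2) (U (t 0) (t 1) (t 3) (t 4))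
        + B (t 3) (U (t 0) (t 1) (t 2) (t 4))
        + T (T (t 0) (t 1) (t 2)) (t 3) (t 4) + T (t 0) (T (t 1) (t 2) (t 3)) (t 4)
        - T (t 1) (T (t 0) (t 2) (t 3)) (t 4) + T (t 2) (T (t 0) (t 1) (t 3)) (t 4)
        + T (t 0) (t 1) (T (t 2) (t 3) (t 4)) - T (t 0) (t 2) (T (t 1) (t 3) (t 4))
        + T (t 1) (t 2) (T (t 0) (t 3) (t 4)) + T (t 0) (t 3) (T (t 1) (t 2) (t 4))
        - T (t 1) (t 3) (T (t 0) (t 2) (t 4)) + T (t 2) (t 3) (T (t 0) (t 1) (t 4))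
        + U (B (t 0) (t 1)) (t 2) (t 3) (t 4) - U (t 0) (B (t 1) (t 2)) (t 3) (t 4)
        + U (t 1) (B (t 0) (t 2)) (t 3) (t 4) + U (t 0) (t 1) (B (t 2) (t 3)) (t 4)
        - U (t 0) (t 2) (B (t 1) (t 3)) (t 4) + U (t 1) (t 2) (B (t 0) (t 3)) (t 4)
        - U (t 0) (t 1) (t 2) (B (t 3) (t 4)) + U (t 0) (t 1) (t 3) (B (t 2) (t 4))
        - U (t 0) (t 2) (t 3) (B (t 1) (t 4)) + U (t 1) (t 2) (t 3) (B (t 0) (t 4))) := by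
  have e1 : AdmRep k (m := 5) (pc 2 0 1 l2 l4)
      (fun t => B (U (t 0) (t 1) (t 2) (t 3)) (t 4)) :=
    h2.pc (m₁ := 0) (m₂ := 1) h4 (.inl ⟨1, rfl⟩)
  have e2 : AdmRep k (m := 5) (pc 2 1 0 l2 l4)
      (fun t => B (t 0) (U (t 1) (t 2) (t 3) (t 4))) :=
    h2.pc (m₁ := 1) (m₂ := 0) h4 (.inl ⟨1, rfl⟩)
  have e3 : AdmRep k (m := 5) (pc 2 0 2 l3 l3)
      (fun t => T (T (t 0) (t 1) (t 2)) (t 3) (t 4)) :=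
    h3.pc (m₁ := 0) (m₂ := 2) h3 (.inr fun _ => hT _ _ _)
  have e4 : AdmRep k (m := 5) (pc 2 1 1 l3 l3)
      (fun t => T (t 0) (T (t 1) (t 2) (t 3)) (t 4)) :=
    h3.pc (m₁ := 1) (m₂ := 1) h3 (.inr fun _ => hT _ _ _)
  have e5 : AdmRep k (m := 5) (pc 2 2 0 l3 l3)
      (fun t => T (t 0) (t 1) (T (t 2) (t 3) (t 4))) :=
    h3.pc (m₁ := 2) (m₂ := 0) h3 (.inr fun _ => hT _ _ _)
  have e6 : AdmRep k (m := 5) (pc 2 0 3 l4 l2)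
      (fun t => U (B (t 0) (t 1)) (t 2) (t 3) (t 4)) :=
    h4.pc (m₁ := 0) (m₂ := 3) h2 (.inl ⟨0, rfl⟩)
  have e7 : AdmRep k (m := 5) (pc 2 1 2 l4 l2)
      (fun t => U (t 0) (B (t 1) (t 2)) (t 3) (t 4)) :=
    h4.pc (m₁ := 1) (m₂ := 2) h2 (.inl ⟨0, rfl⟩)
  have e8 : AdmRep k (m := 5) (pc 2 2 1 l4 l2)
      (fun t => U (t 0) (t 1) (B (t 2) (t 3)) (t 4)) :=
    h4.pc (m₁ := 2) (m₂ := 1) h2 (.inl ⟨0, rfl⟩)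
  have e9 : AdmRep k (m := 5) (pc 2 3 0 l4 l2)
      (fun t => U (t 0) (t 1) (t 2) (B (t 3) (t 4))) :=
    h4.pc (m₁ := 3) (m₂ := 0) h2 (.inl ⟨0, rfl⟩)
  exact ((((((((((((((((((((((((e1.sub e2).add (e2.pa _)).sub (e2.pa _)).add (e2.pa _)).add
    e3).add e4).sub (e4.pa _)).add (e4.pa _)).add e5).sub (e5.pa _)).add (e5.pa _)).add
    (e5.pa _)).sub (e5.pa _)).add (e5.pa _)).add e6).sub e7).add (e7.pa _)).add e8).sub
    (e8.pa _)).add (e8.pa _)).sub e9).add (e9.pa _)).sub (e9.pa _)).add (e9.pa _)).eval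

end Jacobi
/-! ## The identities extracted from the Leibniz 3-algebra structure -/

namespace ClwxOps

variable {k R E0 E1 : Type} [Field k] [AddCommGroup R] [AddCommGroup E0]
    [AddCommGroup E1] [Module k R] [Module k E0] [Module k E1] {C : ClwxOps k R E0 E1}

theorem laws_of_isLeibniz3 {D : MMap (cl R E0 E1) (cl R E0 E1) 1 (-1)}
    {l2 : MMap (cl R E0 E1) (cl R E0 E1) 2 0} {l3 : MMap (cl R E0 E1) (cl R E0 E1) 3 1}
    (hD : Represents k D (fun t => C.diff (t 0)))
    (h2 : AdmRep k l2 (fun t => C.prod (t 0) (t 1)))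
    (h3 : AdmRep k l3 (fun t => C.omega (t 0) (t 1) (t 2)))
    (hL : IsLeibniz3 k D l2 l3 0)
    (c00_skew : ∀ x y, C.c00 x y = - C.c00 y x)
    (om12 : ∀ x y z, C.Om y x z = - C.Om x y z)
    (om23 : ∀ x y z, C.Om x z y = - C.Om x y z)
    (om34 : ∀ x y z w, C.S w (C.Om x y z) = - C.S z (C.Om x y w))
    (c10_eq : ∀ x a, C.c10 a x = C.Dm (C.S x a) - C.c01 x a)
    (S_pd : ∀ a b, C.S (C.pd a) b = C.S (C.pd b) a)
    (S_c01 : ∀ x y a, C.S y (C.c01 x a) = C.S x (C.Dm (C.S y a)) - C.S (C.c00 x y) a)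
    (pd_Dm : ∀ f, C.pd (C.Dm f) = 0)
    (c01_Dm : ∀ x f, C.c01 x (C.Dm f) = C.Dm (C.S x (C.Dm f))) : C.Laws := by
  have L1 := Represents.apply_eq (hD.bd_two (h := by norm_num) h2.eval
    (by intro u v; simp [prod, Prod.ext_iff]; abel)) AdmRep.zero.eval hL.eqL1
  have L2 := Represents.apply_eq (hD.bd_three (h := by norm_num) h3.eval
    (by intro u v w; simp [omega]) (by intro u v w; simp [omega]))
    (represents_jacobi_two h2) hL.eqL2
  have L3 := Represents.apply_eq (hD.bd_of_vanish (h := by norm_num) AdmRep.zero.eval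
    (fun _ _ _ => rfl)) (represents_jacobi_three h2 h3 fun _ _ _ => rfl) hL.eqL3
  have L1xa := fun x a => L1 ![.inl x, .inr (.inl a)]
  have L1ab := fun a b => L1 ![.inr (.inl a), .inr (.inl b)]
  have L2xyz := fun x y z => L2 ![.inl x, .inl y, .inl z]
  have L2xya := fun x y a => L2 ![.inl x, .inl y, .inr (.inl a)]
  have L2xyf := fun x y f => L2 ![.inl x, .inl y, .inr (.inr f)]
  have L3xyzw := fun x y z w => L3 ![.inl x, .inl y, .inl z, .inl w]
  clear L1 L2 L3
  simp [htot, diff, prod, omega, parity] at L1xa L1ab L2xyz L2xya L2xyf L3xyzw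
  refine ⟨c00_skew, om12, om23, om34, c10_eq, S_pd, S_c01, pd_Dm, c01_Dm,
    fun x a => sub_eq_zero.mp (L1xa x a), fun a b => ?_, fun x y z => (L2xyz x y z).1, L2xya,
    fun x y f => ?_, fun x y z w => (L3xyzw x y z w).symm⟩
  · have h := L1ab a b
    rw [c10_eq, S_pd b a, ← sub_eq_add_neg, sub_eq_zero] at h
    exact h.symm
  · have h := congrArg (fun u : E0 × E1 × R => u.2.2) (L2xyf x y f)
    simp only [Prod.snd_zero] at h
    linear_combination (norm := module) h

end ClwxOps
/-! ## Skew-symmetrization on the total module -/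

section Perm

variable {T W : Type} [AddCommGroup W]

theorem sum_sign_smul_two (f : T → T → W) (t : Fin 2 → T) :
    ∑ σ : Equiv.Perm (Fin 2), (Equiv.Perm.sign σ : ℤ) • f (t (σ.symm 0)) (t (σ.symm 1))
      = f (t 0) (t 1) - f (t 1) (t 0) := by
  rw [show (Finset.univ : Finset (Equiv.Perm (Fin 2))) = {1, P12 2} by decide,
    Finset.sum_pair (by decide), Equiv.Perm.sign_one,
    show Equiv.Perm.sign (P12 2) = -1 by decide, sub_eq_add_neg]
  rw [show f (t ((1 : Equiv.Perm (Fin 2)).symm 0)) (t ((1 : Equiv.Perm (Fin 2)).symm 1))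
      = f (t 0) (t 1) from rfl,
    show f (t ((P12 2).symm 0)) (t ((P12 2).symm 1)) = f (t 1) (t 0) from rfl]
  simp

theorem sum_sign_smul_three (f : T → T → T → W) (t : Fin 3 → T) :
    ∑ σ : Equiv.Perm (Fin 3), (Equiv.Perm.sign σ : ℤ) •
        f (t (σ.symm 0)) (t (σ.symm 1)) (t (σ.symm 2))
      = f (t 0) (t 1) (t 2) - f (t 1) (t 0) (t 2) - f (t 2) (t 1) (t 0) - f (t 0) (t 2) (t 1)
        + f (t 2) (t 0) (t 1) + f (t 1) (t 2) (t 0) := by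
  rw [show (Finset.univ : Finset (Equiv.Perm (Fin 3)))
      = {1, P12 3, P13 3, P23 3, P123 3, P132 3} by decide]
  rw [Finset.sum_insert (by decide), Finset.sum_insert (by decide), Finset.sum_insert (by decide),
    Finset.sum_insert (by decide), Finset.sum_pair (by decide), Equiv.Perm.sign_one,
    show Equiv.Perm.sign (P12 3) = -1 by decide, show Equiv.Perm.sign (P13 3) = -1 by decide,
    show Equiv.Perm.sign (P23 3) = -1 by decide, show Equiv.Perm.sign (P123 3) = 1 by decide,
    show Equiv.Perm.sign (P132 3) = 1 by decide]
  rw [show f (t ((1 : Equiv.Perm (Fin 3)).symm 0)) (t ((1 : Equiv.Perm (Fin 3)).symm 1))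
      (t ((1 : Equiv.Perm (Fin 3)).symm 2)) = f (t 0) (t 1) (t 2) from rfl,
    show f (t ((P12 3).symm 0)) (t ((P12 3).symm 1)) (t ((P12 3).symm 2))
      = f (t 1) (t 0) (t 2) from rfl,
    show f (t ((P13 3).symm 0)) (t ((P13 3).symm 1)) (t ((P13 3).symm 2))
      = f (t 2) (t 1) (t 0) from rfl,
    show f (t ((P23 3).symm 0)) (t ((P23 3).symm 1)) (t ((P23 3).symm 2))
      = f (t 0) (t 2) (t 1) from rfl,
    show f (t ((P123 3).symm 0)) (t ((P123 3).symm 1)) (t ((P123 3).symm 2))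
      = f (t 2) (t 0) (t 1) from rfl,
    show f (t ((P132 3).symm 0)) (t ((P132 3).symm 1)) (t ((P132 3).symm 2))
      = f (t 1) (t 2) (t 0) from rfl]
  simp
  abel

theorem sum_sign_smul_of_swap {n : ℕ} {F : (Fin (n + 1) → T) → W}
    (h : ∀ (t : Fin (n + 1) → T) (i : Fin n),
      F (fun j => t (Equiv.swap i.castSucc i.succ j)) = - F t) (t : Fin (n + 1) → T) :
    ∑ σ : Equiv.Perm (Fin (n + 1)), (Equiv.Perm.sign σ : ℤ) • F (fun j => t (σ.symm j))
      = (n + 1).factorial • F t := by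
  have e (σ : Equiv.Perm (Fin (n + 1))) :
      (Equiv.Perm.sign σ : ℤ) • F (fun j => t (σ.symm j)) = F t := by
    rw [comp_perm_of_swap h, Equiv.Perm.sign_symm, smul_smul, ← Units.val_mul,
      Int.units_mul_self, Units.val_one, one_smul]
  rw [Finset.sum_congr rfl fun σ _ => e σ, Finset.sum_const, Finset.card_univ,
    Fintype.card_perm, Fintype.card_fin]

end Perm

section Skew

variable {k R E0 E1 : Type} [Field k] [AddCommGroup R] [AddCommGroup E0]
    [AddCommGroup E1] [Module k R] [Module k E0] [Module k E1]

theorem AdmRep.skew {m : ℕ} {r : ℤ} {μ : MMap (cl R E0 E1) (cl R E0 E1) m r}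
    {F : (Fin m → E0 × E1 × R) → E0 × E1 × R} (hμ : AdmRep k μ F) :
    AdmRep k (∑ σ : Equiv.Perm (Fin m), (Equiv.Perm.sign σ : ℤ) • WL3.pa σ μ)
      (fun t => ∑ σ : Equiv.Perm (Fin m), (Equiv.Perm.sign σ : ℤ) • F (fun j => t (σ.symm j))) :=
  AdmRep.sum _ fun σ => (hμ.pa σ).zsmul _

theorem AdmRep.pa_eq {n : ℕ} {r : ℤ} {μ : MMap (cl R E0 E1) (cl R E0 E1) (n + 1) r}
    {F : (Fin (n + 1) → E0 × E1 × R) → E0 × E1 × R} (hμ : AdmRep k μ F)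
    (h : ∀ t (i : Fin n), F (fun j => t (Equiv.swap i.castSucc i.succ j)) = - F t)
    (σ : Equiv.Perm (Fin (n + 1))) : WL3.pa σ μ = (Equiv.Perm.sign σ : ℤ) • μ :=
  (hμ.pa σ).eval.eq (hμ.zsmul _).eval fun t => by
    rw [comp_perm_of_swap h, Equiv.Perm.sign_symm]

namespace ClwxOps

variable {C : ClwxOps k R E0 E1}

theorem Laws.bracket_swap (h : C.Laws) (t : Fin 2 → E0 × E1 × R) (i : Fin 1) :
    C.bracket (t (Equiv.swap i.castSucc i.succ 0)) (t (Equiv.swap i.castSucc i.succ 1))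
      = - C.bracket (t 0) (t 1) := by
  fin_cases i
  change C.bracket (t 1) (t 0) = _
  ext
  · exact h.c00_skew _ _
  · simp [bracket]
  · simp [bracket]

theorem Laws.triple_swap [CharZero k] (h : C.Laws) (t : Fin 3 → E0 × E1 × R) (i : Fin 2) :
    C.triple (t (Equiv.swap i.castSucc i.succ 0)) (t (Equiv.swap i.castSucc i.succ 1))
      (t (Equiv.swap i.castSucc i.succ 2)) = - C.triple (t 0) (t 1) (t 2) := by
  fin_cases i
  · change C.triple (t 1) (t 0) (t 2) = _
    simp only [triple, h.om12 (t 0).1, h.tau_swap (t 0).1 (t 1).1, h.tau_swap (t 2).1 (t 0).1,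
      h.tau_swap (t 1).1 (t 2).1, Prod.neg_mk, neg_zero]
    congr 2
    abel
  · change C.triple (t 0) (t 2) (t 1) = _
    simp only [triple, h.om23 (t 0).1 (t 1).1, h.tau_swap (t 0).1 (t 1).1,
      h.tau_swap (t 2).1 (t 0).1, h.tau_swap (t 1).1 (t 2).1, Prod.neg_mk, neg_zero]
    congr 2
    abel

theorem Laws.quadruple_swap (h : C.Laws) (t : Fin 4 → E0 × E1 × R) (i : Fin 3) :
    C.quadruple (t (Equiv.swap i.castSucc i.succ 0)) (t (Equiv.swap i.castSucc i.succ 1))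
      (t (Equiv.swap i.castSucc i.succ 2)) (t (Equiv.swap i.castSucc i.succ 3))
      = - C.quadruple (t 0) (t 1) (t 2) (t 3) := by
  fin_cases i
  · change C.quadruple (t 1) (t 0) (t 2) (t 3) = _
    simp [quadruple, h.om12 (t 0).1]
  · change C.quadruple (t 0) (t 2) (t 1) (t 3) = _
    simp [quadruple, h.om23 (t 0).1 (t 1).1]
  · change C.quadruple (t 0) (t 1) (t 3) (t 2) = _
    simp [quadruple, h.om34 _ _ (t 2).1 (t 3).1]

theorem Laws.skew_omega (h : C.Laws) (u v w : E0 × E1 × R) :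
    C.omega u v w - C.omega v u w - C.omega w v u - C.omega u w v + C.omega w u v + C.omega v w u
      = (6 : k) • C.omega u v w := by
  have e : C.omega w v u = - C.omega u v w := by
    simp [omega, h.om23 w.1 u.1, h.om12 u.1 w.1, h.om23 u.1 v.1]
  have e' : C.omega v w u = C.omega u v w := by
    simp [omega, h.om_cycle]
  have e'' : C.omega w u v = C.omega u v w := by
    simp [omega, h.om_cycle]
  have e1 : C.omega v u w = - C.omega u v w := by simp [omega, h.om12 u.1]
  have e2 : C.omega u w v = - C.omega u v w := by simp [omega, h.om23 u.1 v.1]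
  rw [e, e', e'', e1, e2]
  module

variable [CharZero k]

theorem Laws.skew_prod (h : C.Laws) (u v : E0 × E1 × R) :
    (2 : k)⁻¹ • (C.prod u v - C.prod v u) = C.bracket u v := by
  ext
  · simp only [prod, bracket, h.c00_skew v.1, Prod.smul_fst, Prod.fst_sub]
    match_scalars
    norm_num
  · simp only [prod, bracket, act_apply, h.c10_eq, Prod.smul_fst, Prod.fst_sub, Prod.smul_snd,
      Prod.snd_sub]
    match_scalars <;> norm_num
  · simp only [prod, bracket, Prod.smul_snd, Prod.snd_sub, smul_sub]

/-- The skew-symmetrization of `λ21 ∘₁ λ2`. -/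
theorem Laws.skew_pairing_prod (h : C.Laws) (u v w : E0 × E1 × R) :
    C.pairing (C.prod u v) w - C.pairing (C.prod v u) w - C.pairing (C.prod w v) u
        - C.pairing (C.prod u w) v + C.pairing (C.prod w u) v + C.pairing (C.prod v w) u
      = (0, 0, -(12 : k) • (C.tau u.1 v.1 w.2.1 + C.tau v.1 w.1 u.2.1 + C.tau w.1 u.1 v.2.1)) := by
  ext
  · simp [pairing]
  · simp [pairing]
  · simp only [pairing, prod, Prod.snd_sub, Prod.snd_add, tau, h.c10_eq, map_add, map_sub,
      h.S_c01, h.c00_skew v.1 u.1, h.c00_skew w.1 v.1, h.c00_skew u.1 w.1,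
      map_neg, LinearMap.neg_apply]
    match_scalars <;> norm_num

theorem Laws.skew_pairing_prod_right (h : C.Laws) (u v w : E0 × E1 × R) :
    C.pairing u (C.prod v w) - C.pairing v (C.prod u w) - C.pairing w (C.prod v u)
        - C.pairing u (C.prod w v) + C.pairing w (C.prod u v) + C.pairing v (C.prod w u)
      = (0, 0, -(12 : k) • (C.tau u.1 v.1 w.2.1 + C.tau v.1 w.1 u.2.1 + C.tau w.1 u.1 v.2.1)) := by
  have hs (u v : E0 × E1 × R) : C.pairing u v = C.pairing v u := by simp only [pairing, add_comm]
  rw [← h.skew_pairing_prod, hs u, hs u, hs v, hs v, hs w, hs w]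
  abel

end ClwxOps

variable {C : ClwxOps k R E0 E1} {A : WeakLie3 k (cl R E0 E1)}

theorem admRep_skew2 [CharZero k] [Invertible (2 : k)] (h : C.Laws)
    (h2 : AdmRep k A.l2 (fun t => C.prod (t 0) (t 1))) :
    AdmRep k (skew2 k A) (fun t => C.bracket (t 0) (t 1)) :=
  (h2.skew.smul _).congr fun t => by
    rw [sum_sign_smul_two (fun u v => C.prod u v), invOf_eq_inv, h.skew_prod]

theorem admRep_pairing_prod (h2 : AdmRep k A.l2 (fun t => C.prod (t 0) (t 1)))
    (h21 : AdmRep k A.l21 (fun t => C.pairing (t 0) (t 1))) :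
    AdmRep k (m := 3) (pc 1 0 1 A.l21 A.l2) (fun t => C.pairing (C.prod (t 0) (t 1)) (t 2)) :=
  h21.pc (m₁ := 0) (m₂ := 1) h2 (.inl ⟨0, rfl⟩)

theorem admRep_skew_pairing_prod [CharZero k] (h : C.Laws)
    (h2 : AdmRep k A.l2 (fun t => C.prod (t 0) (t 1)))
    (h21 : AdmRep k A.l21 (fun t => C.pairing (t 0) (t 1))) :
    AdmRep k (∑ σ : Equiv.Perm (Fin 3), (Equiv.Perm.sign σ : ℤ) • pa σ (pc 1 0 1 A.l21 A.l2))
      (fun t => (0, 0, -(12 : k) • (C.tau (t 0).1 (t 1).1 (t 2).2.1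
        + C.tau (t 1).1 (t 2).1 (t 0).2.1 + C.tau (t 2).1 (t 0).1 (t 1).2.1))) :=
  (admRep_pairing_prod h2 h21).skew.congr fun t => by
    rw [sum_sign_smul_three (fun u v w => C.pairing (C.prod u v) w), h.skew_pairing_prod]

theorem admRep_skew3 [CharZero k] [Invertible (2 : k)] [Invertible (3 : k)] (h : C.Laws)
    (h2 : AdmRep k A.l2 (fun t => C.prod (t 0) (t 1)))
    (h3 : AdmRep k A.l3 (fun t => C.omega (t 0) (t 1) (t 2)))
    (h21 : AdmRep k A.l21 (fun t => C.pairing (t 0) (t 1))) :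
    AdmRep k (skew3 k A) (fun t => C.triple (t 0) (t 1) (t 2)) := by
  have e : AdmRep k (m := 3) (pc 1 1 0 A.l21 A.l2)
      (fun t => C.pairing (t 0) (C.prod (t 1) (t 2))) :=
    h21.pc (m₁ := 1) (m₂ := 0) h2 (.inl ⟨0, rfl⟩)
  refine ((h3.skew.smul _).sub
    (((admRep_pairing_prod h2 h21).add e).skew.smul _)).congr fun t => ?_
  rw [sum_sign_smul_three (fun u v w => C.omega u v w),
    sum_sign_smul_three (fun u v w => C.pairing (C.prod u v) w + C.pairing u (C.prod v w)),
    h.skew_omega, invOf_eq_inv, invOf_eq_inv]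
  have e1 := h.skew_pairing_prod (t 0) (t 1) (t 2)
  have e2 := h.skew_pairing_prod_right (t 0) (t 1) (t 2)
  have e3 : C.triple (t 0) (t 1) (t 2) = C.omega (t 0) (t 1) (t 2)
      - (12 : k)⁻¹ • (0, 0, -(12 : k) • (C.tau (t 0).1 (t 1).1 (t 2).2.1
        + C.tau (t 1).1 (t 2).1 (t 0).2.1 + C.tau (t 2).1 (t 0).1 (t 1).2.1)) := by
    simp [ClwxOps.triple, ClwxOps.omega]
    abel
  rw [e3]
  linear_combination (norm := skip) (-(24 : k)⁻¹) • (e1 + e2)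
  match_scalars <;> norm_num

theorem admRep_pairing_omega (h3 : AdmRep k A.l3 (fun t => C.omega (t 0) (t 1) (t 2)))
    (h21 : AdmRep k A.l21 (fun t => C.pairing (t 0) (t 1))) :
    AdmRep k (m := 4) (pc 2 0 1 A.l21 A.l3)
      (fun t => C.quadruple (t 0) (t 1) (t 2) (t 3)) := by
  have e : AdmRep k (m := 4) (pc 2 0 1 A.l21 A.l3)
      (fun t => C.pairing (C.omega (t 0) (t 1) (t 2)) (t 3)) :=
    h21.pc (m₁ := 0) (m₂ := 1) h3 (.inr fun _ => rfl)
  exact e.congr fun t => by simp [ClwxOps.pairing, ClwxOps.omega, ClwxOps.quadruple]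

theorem admRep_skew4 [CharZero k] [Invertible (2 : k)] [Invertible (3 : k)] (h : C.Laws)
    (h2 : AdmRep k A.l2 (fun t => C.prod (t 0) (t 1)))
    (h3 : AdmRep k A.l3 (fun t => C.omega (t 0) (t 1) (t 2)))
    (h21 : AdmRep k A.l21 (fun t => C.pairing (t 0) (t 1)))
    (h31 : A.l31 = 0) (h32 : A.l32 = 0) (h4 : A.l4 = 0) :
    AdmRep k (skew4 k A) (fun t => C.quadruple (t 0) (t 1) (t 2) (t 3)) := by
  have e : AdmRep k (m := 4) (pc 2 1 0 A.l21 A.l3)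
      (fun t => - C.quadruple (t 0) (t 1) (t 2) (t 3)) := by
    have e : AdmRep k (m := 4) (pc 2 1 0 A.l21 A.l3)
        (fun t => C.pairing (t 0) (C.omega (t 1) (t 2) (t 3))) :=
      h21.pc (m₁ := 1) (m₂ := 0) h3 (.inr fun _ => rfl)
    refine e.congr fun t => ?_
    simp [ClwxOps.pairing, ClwxOps.omega, ClwxOps.quadruple, h.om34 _ _ (t 3).1 (t 0).1, h.om_cycle]
  have z1 : AdmRep k (m := 4) (pc 2 0 2 A.l31 A.l2) (fun _ => 0) := by
    rw [h31]; exact AdmRep.zero.pc (m₁ := 0) (m₂ := 2) h2 (.inl ⟨0, rfl⟩)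
  have z2 : AdmRep k (m := 4) (pc 2 1 1 A.l32 A.l2) (fun _ => 0) := by
    rw [h32]; exact AdmRep.zero.pc (m₁ := 1) (m₂ := 1) h2 (.inl ⟨0, rfl⟩)
  have z3 : AdmRep k (m := 4) (pc 2 1 1 A.l31 A.l2) (fun _ => 0) := by
    rw [h31]; exact AdmRep.zero.pc (m₁ := 1) (m₂ := 1) h2 (.inl ⟨0, rfl⟩)
  have z4 : AdmRep k (m := 4) (pc 2 2 0 A.l32 A.l2) (fun _ => 0) := by
    rw [h32]; exact AdmRep.zero.pc (m₁ := 2) (m₂ := 0) h2 (.inl ⟨0, rfl⟩)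
  have z5 : AdmRep k A.l4 (fun _ => 0) := by rw [h4]; exact AdmRep.zero
  refine ((z5.skew.smul _).add (((((((admRep_pairing_omega h3 h21).sub z1).add z2).sub e).sub
    z3).add z4).skew.smul _)).congr fun t => ?_
  simp only [smul_zero, Finset.sum_const_zero, zero_add, add_zero, sub_zero, sub_neg_eq_add]
  rw [sum_sign_smul_of_swap (n := 3)
    (F := fun t => C.quadruple (t 0) (t 1) (t 2) (t 3) + C.quadruple (t 0) (t 1) (t 2) (t 3))
    (fun t i => by rw [h.quadruple_swap, neg_add]), invOf_eq_inv, invOf_eq_inv,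
    show Nat.factorial (3 + 1) = 24 from rfl]
  match_scalars
  norm_num

end Skew
/-! ## The Lie 3-algebra -/

section Lie

variable {k R E0 E1 : Type} [Field k] [CharZero k] [AddCommGroup R] [AddCommGroup E0]
    [AddCommGroup E1] [Module k R] [Module k E0] [Module k E1] {C : ClwxOps k R E0 E1}

theorem ClwxOps.Laws.isLeibniz3 (h : C.Laws) {D : MMap (cl R E0 E1) (cl R E0 E1) 1 (-1)}
    {l2 : MMap (cl R E0 E1) (cl R E0 E1) 2 0} {l3 : MMap (cl R E0 E1) (cl R E0 E1) 3 1}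
    {l4 : MMap (cl R E0 E1) (cl R E0 E1) 4 2} (hD : Represents k D (fun t => C.diff (t 0)))
    (h2 : AdmRep k l2 (fun t => C.bracket (t 0) (t 1)))
    (h3 : AdmRep k l3 (fun t => C.triple (t 0) (t 1) (t 2)))
    (h4 : AdmRep k l4 (fun t => C.quadruple (t 0) (t 1) (t 2) (t 3))) :
    IsLeibniz3 k D l2 l3 l4 where
  lin2 := h2.eval.isMultilinear
    (fun t i u v => by
      fin_cases i <;> simp [bracket, Function.update, Prod.ext_iff] <;> constructor <;> module)
    (fun t i c u => by
      fin_cases i <;> simp [bracket, Function.update, Prod.ext_iff] <;> constructor <;> module)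
  lin3 := h3.eval.isMultilinear
    (fun t i u v => by
      fin_cases i <;>
      simp [triple, Function.update, tau_add_left, tau_add_mid, tau_add_right] <;> abel)
    (fun t i c u => by
      fin_cases i <;>
      simp [triple, Function.update, tau_smul_left, tau_smul_mid, tau_smul_right])
  lin4 := h4.eval.isMultilinear
    (fun t i u v => by fin_cases i <;> simp [quadruple, Function.update])
    (fun t i c u => by fin_cases i <;> simp [quadruple, Function.update])
  eqL1 := (hD.bd_two (h := by norm_num) h2.eval (fun u v => by
      simp [bracket, Prod.ext_iff]; constructor <;> module)).eq AdmRep.zero.eval fun t => by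
    simp [h.diff_bracket]
  eqL2 := (hD.bd_three (h := by norm_num) h3.eval
      (fun u v w => by simp [triple, tau_neg_left, tau_neg_mid, tau_neg_right]; abel)
      (fun u v w => by simp [triple, tau_neg_left, tau_neg_mid, tau_neg_right]; abel)).eq
      (represents_jacobi_two h2) fun t => by
    simp [← h.diff_triple]
    abel
  eqL3 := (hD.bd_of_vanish (h := by norm_num) h4.eval (fun t i ht => by
      fin_cases i <;> simp at ht <;> simp [quadruple, ht])).eq
      (represents_jacobi_three h2 h3 fun _ _ _ => rfl) fun t => by
    rw [← h.diff_quadruple, Fin.sum_univ_four]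
    simp [Function.update]
  eqL4 := AdmRep.zero.eval.eq (represents_jacobi_four h2 h3 (fun _ _ _ => rfl) h4)
    fun t => h.quadruple_cocycle _ _ _ _ _

end Lie

/-- **Skew-symmetrization of the weak Lie 3-algebra of a CLWX 2-algebroid**: the
skew-symmetrization `λ̄` is a (semi-strict) Lie 3-algebra structure, given explicitly by
`λ̄2 = ½(λ2 - λ2^{(12)})`, `λ̄3 = Ω - (1/12)·Σ_σ sgn σ·(λ21 ∘₁ λ2)^σ` and
`λ̄4 = λ21 ∘₁ λ3`; in particular these maps are skew-symmetric and satisfy (L1)–(L4). -/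
theorem skew_symmetrization_of_CLWX
    (k : Type) [Field k] [CharZero k] [Invertible (2 : k)] [Invertible (3 : k)]
    (R : Type) [CommRing R] [Algebra k R]
    (E0 E1 : Type) [AddCommGroup E0] [AddCommGroup E1]
    [Module R E0] [Module R E1] [Module k E0] [Module k E1]
    [IsScalarTower k R E0] [IsScalarTower k R E1]
    (pd : E1 →ₗ[R] E0)
    (ρ : E0 →ₗ[k] Derivation k R R)
    (S : E0 →ₗ[k] E1 →ₗ[k] R)
    (c00 : E0 →ₗ[k] E0 →ₗ[k] E0) (c01 : E0 →ₗ[k] E1 →ₗ[k] E1) (c10 : E1 →ₗ[k] E0 →ₗ[k] E1)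
    (Om : E0 →ₗ[k] E0 →ₗ[k] E0 →ₗ[k] E1)
    (Dm : R →ₗ[k] E1)
    (hD : ∀ (x : E0) (f : R), S x (Dm f) = ρ x f)
    (hskew : ∀ x y : E0, c00 x y = - c00 y x)
    (hOm12 : ∀ x y z : E0, Om y x z = - Om x y z)
    (hOm23 : ∀ x y z : E0, Om x z y = - Om x y z)
    (hC2a : ∀ x : E0, c00 x x = 0)
    (hC2b : ∀ (x : E0) (a : E1), c01 x a + c10 a x = (2 : k)⁻¹ • Dm (S x a + S x a))
    (hC3 : ∀ a b : E1, S (pd a) b = S (pd b) a)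
    (hC4a : ∀ (x y : E0) (b : E1), ρ x (S y b) = S (c00 x y) b + S y (c01 x b))
    (hC4b : ∀ (x z : E0) (a : E1), ρ x (S z a) = S z (c01 x a) + S (c00 x z) a)
    (hC4c : ∀ (a : E1) (y z : E0), S z (c10 a y) + S y (c10 a z) = 0)
    (hC5 : ∀ x1 x2 x3 x4 : E0, S x4 (Om x1 x2 x3) = - S x3 (Om x1 x2 x4))
    (hC6 : ∀ f : R, pd (Dm f) = 0)
    (hC7 : ∀ (x : E0) (f : R), c01 x (Dm f) = Dm (ρ x f))
    (hC8 : ∀ (f : R) (x : E0), c10 (Dm f) x = 0)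
    -- the weak Lie 3-algebra associated to the CLWX 2-algebroid
    (A : WeakLie3 k (cl R E0 E1))
    (hAD : A.D = mkD (fun a => pd a) (fun f => Dm f))
    (hA2 : A.l2 = mkl2 (fun x y => c00 x y) (fun x a => c01 x a) (fun a x => c10 a x)
      (fun x a => S x a) (fun f => Dm f))
    (hA3 : A.l3 = mkl3 (fun x y z => Om x y z))
    (hA21 : A.l21 = mkl21 (fun x a => S x a))
    (hA211 : A.l211 = 0) (hA31 : A.l31 = 0) (hA32 : A.l32 = 0) (hA4 : A.l4 = 0) :
    IsLeibniz3 k A.D (skew2 k A) (skew3 k A) (skew4 k A) ∧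
    (∀ σ : Equiv.Perm (Fin 2), pa σ (skew2 k A) = (Equiv.Perm.sign σ : ℤ) • skew2 k A) ∧
    (∀ σ : Equiv.Perm (Fin 3), pa σ (skew3 k A) = (Equiv.Perm.sign σ : ℤ) • skew3 k A) ∧
    (∀ σ : Equiv.Perm (Fin 4), pa σ (skew4 k A) = (Equiv.Perm.sign σ : ℤ) • skew4 k A) ∧
    skew2 k A = (⅟ (2 : k)) • (A.l2 - pa (P12 2) A.l2) ∧
    skew3 k A = A.l3 - (⅟ (2 : k) * ⅟ (2 : k) * ⅟ (3 : k)) •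
      ∑ σ : Equiv.Perm (Fin 3), (Equiv.Perm.sign σ : ℤ) • pa σ (pc 1 0 1 A.l21 A.l2) ∧
    skew4 k A = pc 2 0 1 A.l21 A.l3 := by
  let C : ClwxOps k R E0 E1 := ⟨pd.restrictScalars k, S, c00, c01, c10, Om, Dm⟩
  have hD' : Represents k A.D (fun t => C.diff (t 0)) := hAD ▸ represents_mkD C
  have h2 : AdmRep k A.l2 (fun t => C.prod (t 0) (t 1)) := hA2 ▸ admRep_mkl2 C
  have h3 : AdmRep k A.l3 (fun t => C.omega (t 0) (t 1) (t 2)) := hA3 ▸ admRep_mkl3 C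
  have h21 : AdmRep k A.l21 (fun t => C.pairing (t 0) (t 1)) := hA21 ▸ admRep_mkl21 C
  have h : C.Laws := ClwxOps.laws_of_isLeibniz3 hD' h2 h3 (hA4 ▸ A.leib) hskew hOm12 hOm23
    (fun x y z w => hC5 x y z w)
    (fun x a => by
      change c10 a x = Dm (S x a) - c01 x a
      rw [eq_sub_iff_add_eq', hC2b, ← two_smul k (S x a), map_smul, smul_smul,
        inv_mul_cancel₀ two_ne_zero, one_smul])
    hC3
    (fun x y a => by
      change S y (c01 x a) = S x (Dm (S y a)) - S (c00 x y) a
      rw [hD, hC4a, add_sub_cancel_left])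
    hC6
    (fun x f => by
      change c01 x (Dm f) = Dm (S x (Dm f))
      rw [hD, hC7])
  have s2 := admRep_skew2 h h2
  have s3 := admRep_skew3 h h2 h3 h21
  have s4 := admRep_skew4 h h2 h3 h21 hA31 hA32 hA4
  refine ⟨h.isLeibniz3 hD' s2 s3 s4, s2.pa_eq h.bracket_swap, s3.pa_eq h.triple_swap,
    s4.pa_eq h.quadruple_swap, ?_, ?_, s4.eval.eq (admRep_pairing_omega h3 h21).eval fun _ => rfl⟩
  · refine s2.eval.eq ((h2.sub (h2.pa _)).smul _).eval fun t => ?_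
    rw [invOf_eq_inv]
    exact (h.skew_prod _ _).symm
  · refine s3.eval.eq (h3.sub ((admRep_skew_pairing_prod h h2 h21).smul _)).eval fun t => ?_
    simp only [invOf_eq_inv, ClwxOps.triple, ClwxOps.omega, Prod.smul_mk, smul_zero,
      Prod.mk_sub_mk, sub_zero, zero_sub]
    congr 2
    match_scalars <;> norm_num

end WL3
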